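/- Every minimal brick has at least one vertex of degree three. -/

import Mathlib

open SimpleGraph
/-- A graph has a perfect matching. -/
def HasPerfectMatching {V : Type*} (G : SimpleGraph V) : Prop :=
  ∃ M : G.Subgraph, M.IsPerfectMatching

/-- `G` is 3-connected: at least 4 vertices, and deleting any at most 2
vertices leaves a connected graph. -/
def IsThreeConnected {V : Type*} [Fintype V] (G : SimpleGraph V) : Prop :=
  4 ≤ Fintype.card V ∧ ∀ S : Set V, S.ncard ≤ 2 → (G.induce Sᶜ).Connected

/-- A brick: a 3-connected graph such that deleting any two distinct vertices
leaves a graph with a perfect matching. -/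
def IsBrick {V : Type*} [Fintype V] (G : SimpleGraph V) : Prop :=
  IsThreeConnected G ∧
    ∀ u v : V, u ≠ v → HasPerfectMatching (G.induce ({u, v} : Set V)ᶜ)

/-- A minimal brick: a brick such that deleting any edge destroys brickness. -/
def IsMinimalBrick {V : Type*} [Fintype V] (G : SimpleGraph V) : Prop :=
  IsBrick G ∧ ∀ e ∈ G.edgeSet, ¬ IsBrick (G.deleteEdges {e})


section core
variable {V : Type*} [DecidableEq V]

def Cl (G : SimpleGraph V) (X S : Finset V) : Prop :=
  ∀ x ∈ X, ∀ y, G.Adj x y → y ∈ X ∨ y ∈ S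

structure OF (G : SimpleGraph V) (𝒟 : Finset (Finset V)) (S : Finset V) : Prop where
  disj : ∀ D ∈ 𝒟, ∀ E ∈ 𝒟, D ≠ E → Disjoint D E
  odd : ∀ D ∈ 𝒟, Odd D.card
  dS : ∀ D ∈ 𝒟, Disjoint D S
  cl : ∀ D ∈ 𝒟, Cl G D S

structure TII (G : SimpleGraph V) (a b : V) (P Q T : Finset V) : Prop where
  cov : ∀ v, v ∈ P ∨ v ∈ Q ∨ v ∈ T
  dPQ : Disjoint P Q
  dPT : Disjoint P T
  dQT : Disjoint Q T
  cT : T.card ≤ 2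
  ha : a ∈ P
  hb : b ∈ Q
  only : ∀ x ∈ P, ∀ y ∈ Q, G.Adj x y → x = a ∧ y = b

structure TI (G : SimpleGraph V) (a b : V) (𝒟 : Finset (Finset V)) (T D₁ D₂ : Finset V) :
    Prop where
  h1 : D₁ ∈ 𝒟
  h2 : D₂ ∈ 𝒟
  ne : D₁ ≠ D₂
  ha : a ∈ D₁
  hb : b ∈ D₂
  card : T.card = 𝒟.card
  disj : ∀ D ∈ 𝒟, ∀ E ∈ 𝒟, D ≠ E → Disjoint D E
  odd : ∀ D ∈ 𝒟, Odd D.card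
  dT : ∀ D ∈ 𝒟, Disjoint D T
  cov : ∀ v, v ∈ T ∨ ∃ D ∈ 𝒟, v ∈ D
  cl : ∀ D ∈ 𝒟, ∀ x ∈ D, ∀ y, G.Adj x y →
    y ∈ D ∨ y ∈ T ∨ (x = a ∧ y = b) ∨ (x = b ∧ y = a)
  conn : ∀ D ∈ 𝒟, ∀ Y ⊆ D, Y.Nonempty → (∀ x ∈ Y, ∀ y ∈ D, G.Adj x y → y ∈ Y) → Y = D

structure Base (G : SimpleGraph V) : Prop where
  B : ∀ 𝒟 S, OF G 𝒟 S → 2 ≤ S.card → 𝒟.card + 2 ≤ S.card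
  C : ∀ X S : Finset V, X.Nonempty → Disjoint X S → Cl G X S → (∃ z, z ∉ X ∧ z ∉ S) → 3 ≤ S.card
  deg : ∀ v, ∀ N : Finset V, (∀ y, G.Adj v y → y ∈ N) → 4 ≤ N.card
  bad : ∀ a b, G.Adj a b → (∃ P Q T, TII G a b P Q T) ∨ (∃ 𝒟 T D₁ D₂, TI G a b 𝒟 T D₁ D₂)

structure MinFrag (G : SimpleGraph V) (𝒜 : Finset (Finset V)) (N A : Finset V) : Prop where
  hA : ∀ v, v ∈ A ↔ ∃ X ∈ 𝒜, v ∈ X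
  ne : 𝒜.Nonempty
  disj : ∀ D ∈ 𝒜, ∀ E ∈ 𝒜, D ≠ E → Disjoint D E
  nonemp : ∀ X ∈ 𝒜, X.Nonempty
  dN : ∀ X ∈ 𝒜, Disjoint X N
  cl : ∀ X ∈ 𝒜, Cl G X N
  cardN : N.card = 𝒜.card + 2
  par : (∀ X ∈ 𝒜, Odd X.card) ∨ 𝒜.card = 1
  conn : ∀ D ∈ 𝒜, ∀ Y ⊆ D, Y.Nonempty → (∀ x ∈ Y, ∀ y ∈ D, G.Adj x y → y ∈ Y) → Y = D
  HO : ∀ 𝒟 S, OF G 𝒟 S → 𝒟.Nonempty → (𝒟.biUnion id).card < A.card → 𝒟.card + 3 ≤ S.card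
  HE : ∀ X S : Finset V, X.Nonempty → Disjoint X S → Cl G X S → (∃ z, z ∉ X ∧ z ∉ S) →
    X.card < A.card → 4 ≤ S.card

theorem MinFrag.HO' {G : SimpleGraph V} {𝒜 N A} (h : MinFrag G 𝒜 N A) (𝒟 S) (hO : OF G 𝒟 S)
    (hne : 𝒟.Nonempty) (hs : ∀ D ∈ 𝒟, D ⊆ A) (hz : ∃ z ∈ A, ∀ D ∈ 𝒟, z ∉ D) :
    𝒟.card + 3 ≤ S.card := by
  apply h.HO _ _ hO hne
  apply Finset.card_lt_card
  rw [Finset.ssubset_iff_of_subset]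
  · obtain ⟨z, hz, h2⟩ := hz
    exact ⟨z, hz, by simpa using h2⟩
  · simpa [Finset.biUnion_subset] using hs

theorem sum_inter {𝒜 : Finset (Finset V)} {A : Finset V} (hA : ∀ v, v ∈ A ↔ ∃ X ∈ 𝒜, v ∈ X)
    (disj : ∀ D ∈ 𝒜, ∀ E ∈ 𝒜, D ≠ E → Disjoint D E) (Y : Finset V) :
    ∑ X ∈ 𝒜, (X ∩ Y).card = (A ∩ Y).card := by
  rw [← Finset.card_biUnion]
  · congr 1; ext v; simp [hA]
    constructor
    · rintro ⟨X, h1, h2, h3⟩; exact ⟨⟨X, h1, h2⟩, h3⟩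
    · rintro ⟨⟨X, h1, h2⟩, h3⟩; exact ⟨X, h1, h2, h3⟩
  · intro X hX Y' hY hne
    exact (disj X hX Y' hY hne).mono Finset.inter_subset_left Finset.inter_subset_left

theorem MinFrag.sub {G : SimpleGraph V} {𝒜 N A} (h : MinFrag G 𝒜 N A) {X} (hX : X ∈ 𝒜) : X ⊆ A :=
  fun v hv => (h.hA v).2 ⟨X, hX, hv⟩

theorem MinFrag.AN {G : SimpleGraph V} {𝒜 N A} (h : MinFrag G 𝒜 N A) : Disjoint A N := by
  rw [Finset.disjoint_left]
  intro v hv hN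
  obtain ⟨X, hX, hv⟩ := (h.hA v).1 hv
  exact Finset.disjoint_left.1 (h.dN X hX) hv hN

theorem MinFrag.clA {G : SimpleGraph V} {𝒜 N A} (h : MinFrag G 𝒜 N A) {x y} (hx : x ∈ A)
    (hxy : G.Adj x y) : y ∈ A ∨ y ∈ N := by
  obtain ⟨X, hX, hv⟩ := (h.hA x).1 hx
  rcases h.cl X hX x hv y hxy with h1 | h1
  · exact Or.inl (h.sub hX h1)
  · exact Or.inr h1

theorem card_meet {𝒜 : Finset (Finset V)} (Y : Finset V) :
    (𝒜.filter (fun X => ¬ Disjoint X Y)).card ≤ ∑ X ∈ 𝒜, (X ∩ Y).card := by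
  calc _ = ∑ X ∈ 𝒜.filter (fun X => ¬ Disjoint X Y), 1 := by simp
    _ ≤ ∑ X ∈ 𝒜.filter (fun X => ¬ Disjoint X Y), (X ∩ Y).card := by
      apply Finset.sum_le_sum
      intro X hX
      simp only [Finset.mem_filter, Finset.disjoint_iff_inter_eq_empty] at hX
      exact Finset.card_pos.2 (Finset.nonempty_iff_ne_empty.2 hX.2)
    _ ≤ _ := Finset.sum_le_sum_of_subset (Finset.filter_subset _ _)

set_option maxHeartbeats 2000000 in
theorem typeII_false {G : SimpleGraph V} (hB : Base G) {𝒜 N A} (h : MinFrag G 𝒜 N A)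
    {a b c : V} (ha : a ∈ A) (hb : b ∈ N) (hc : c ∈ A) (hca : c ≠ a)
    (hcb : G.Adj c b) {P Q T} (t : TII G a b P Q T) : False := by
  have hAN := Finset.disjoint_left.1 h.AN
  have hPQ := Finset.disjoint_left.1 t.dPQ
  have hPT := Finset.disjoint_left.1 t.dPT
  have hQT := Finset.disjoint_left.1 t.dQT
  have hbA : b ∉ A := fun h => hAN h hb
  have haN : a ∉ N := fun h => hAN ha h
  have part : ∀ Y : Finset V, Y.card = (Y ∩ P).card + (Y ∩ Q).card + (Y ∩ T).card := by
    intro Y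
    rw [← Finset.card_union_of_disjoint, ← Finset.card_union_of_disjoint]
    · congr 1; ext v; have := t.cov v; simp; tauto
    · rw [Finset.disjoint_left]; intro v; simp; grind
    · rw [Finset.disjoint_left]; intro v; simp; grind
  have cT := t.cT
  have pA := part A
  have pN := part N
  have pT : (A ∩ T).card + (N ∩ T).card ≤ T.card := by
    rw [← Finset.card_union_of_disjoint]
    · apply Finset.card_le_card; intro v; simp; tauto
    · rw [Finset.disjoint_left]; intro v; simp; grind
  have TA : (T \ A).card + (A ∩ T).card = T.card := by
    rw [Finset.inter_comm]; exact Finset.card_sdiff_add_card_inter T A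
  have degP : ∃ z ∈ P, z ≠ a := by
    by_contra hcon
    push Not at hcon
    have := hB.deg a (T ∪ {b}) (by
      intro y hy
      rcases t.cov y with h1 | h1 | h1
      · exact absurd (hcon y h1).symm hy.ne
      · simp [(t.only a t.ha y h1 hy).2]
      · simp [h1])
    have := Finset.card_union_le T {b}
    rw [Finset.card_singleton] at this; omega
  have degQ : ∃ z ∈ Q, z ≠ b := by
    by_contra hcon
    push Not at hcon
    have := hB.deg b (T ∪ {a}) (by
      intro y hy
      rcases t.cov y with h1 | h1 | h1
      · simp [(t.only y h1 b t.hb hy.symm).1]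
      · exact absurd (hcon y h1).symm hy.ne
      · simp [h1])
    have := Finset.card_union_le T {a}
    rw [Finset.card_singleton] at this; omega
  have haP := t.ha
  have hbQ := t.hb
  have mP : A.card ≤ P.card := by
    by_contra hlt
    obtain ⟨z, hz, hzb⟩ := degQ
    have := h.HE P (T ∪ {b}) ⟨a, haP⟩ (by rw [Finset.disjoint_left]; intro v; simp; grind)
      (by
        intro x hx y hy
        rcases t.cov y with h1 | h1 | h1
        · simp [h1]
        · simp [(t.only x hx y h1 hy).2]
        · simp [h1])
      ⟨z, by grind, by simp; grind⟩ (by omega)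
    have := Finset.card_union_le T {b}
    rw [Finset.card_singleton] at this; omega
  have mQ : A.card ≤ Q.card := by
    by_contra hlt
    obtain ⟨z, hz, hzb⟩ := degP
    have := h.HE Q (T ∪ {a}) ⟨b, hbQ⟩ (by rw [Finset.disjoint_left]; intro v; simp; grind)
      (by
        intro x hx y hy
        rcases t.cov y with h1 | h1 | h1
        · simp [(t.only y h1 x hx hy.symm).1]
        · simp [h1]
        · simp [h1])
      ⟨z, by grind, by simp; grind⟩ (by omega)
    have := Finset.card_union_le T {a}
    rw [Finset.card_singleton] at this; omega
  have aP : 1 ≤ (A ∩ P).card := Finset.card_pos.2 ⟨a, by simp [ha, haP]⟩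
  have star : (A ∩ T).card + 1 ≤ (N ∩ Q).card := by
    by_cases hz : (Q \ (A ∪ N)).Nonempty
    · have := hB.C (Q \ (A ∪ N)) ((N ∩ Q) ∪ (T \ A)) hz
        (by rw [Finset.disjoint_left]; intro v; simp; grind)
        (by
          intro x hx y hy
          simp only [Finset.mem_sdiff, Finset.mem_union, not_or] at hx
          have hyA : y ∉ A := fun hyA => by
            rcases h.clA hyA hy.symm with h1 | h1 <;> tauto
          simp only [Finset.mem_union, Finset.mem_sdiff, Finset.mem_inter]
          rcases t.cov y with h1 | h1 | h1
          · have := (t.only y h1 x hx.1 hy.symm).1; grind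
          · tauto
          · tauto)
        ⟨a, by simp [ha], by simp [ha, haN]⟩
      have := Finset.card_union_le (N ∩ Q) (T \ A)
      omega
    · rw [Finset.not_nonempty_iff_eq_empty] at hz
      have : Q ⊆ (A ∩ Q) ∪ (N ∩ Q) := by
        intro v hv
        by_contra hcon
        have : v ∈ Q \ (A ∪ N) := by simp at hcon ⊢; tauto
        simp [hz] at this
      have := (Finset.card_le_card this).trans (Finset.card_union_le _ _)
      omega
  have starP : (A ∩ T).card ≤ (N ∩ P).card := by
    by_cases hz : (P \ (A ∪ N)).Nonempty
    · have := hB.C (P \ (A ∪ N)) ((N ∩ P) ∪ (T \ A)) hz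
        (by rw [Finset.disjoint_left]; intro v; simp; grind)
        (by
          intro x hx y hy
          simp only [Finset.mem_sdiff, Finset.mem_union, not_or] at hx
          have hyA : y ∉ A := fun hyA => by
            rcases h.clA hyA hy.symm with h1 | h1 <;> tauto
          simp only [Finset.mem_union, Finset.mem_sdiff, Finset.mem_inter]
          rcases t.cov y with h1 | h1 | h1
          · tauto
          · have := (t.only x hx.1 y h1 hy).1; grind
          · tauto)
        ⟨a, by simp [ha], by simp [ha, haN]⟩
      have := Finset.card_union_le (N ∩ P) (T \ A)
      omega
    · rw [Finset.not_nonempty_iff_eq_empty] at hz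
      have : P ⊆ (A ∩ P) ∪ (N ∩ P) := by
        intro v hv
        by_contra hcon
        have : v ∈ P \ (A ∪ N) := by simp at hcon ⊢; tauto
        simp [hz] at this
      have := (Finset.card_le_card this).trans (Finset.card_union_le _ _)
      omega
  set 𝒜P := 𝒜.filter (fun X => X ⊆ P) with h𝒜P
  set 𝒜Q := 𝒜.filter (fun X => X ⊆ Q) with h𝒜Q
  set 𝒜T := 𝒜.filter (fun X => ¬ Disjoint X T) with h𝒜T
  have cover : ∀ X ∈ 𝒜, X ∈ 𝒜P ∨ X ∈ 𝒜Q ∨ X ∈ 𝒜T := by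
    intro X hX
    by_cases hXT : Disjoint X T
    · by_cases hXQ : (X ∩ Q).Nonempty
      · have := h.conn X hX (X ∩ Q) Finset.inter_subset_left hXQ (by
          intro x hx y hy hxy
          simp only [Finset.mem_inter] at hx ⊢
          refine ⟨hy, ?_⟩
          rcases t.cov y with h1 | h1 | h1
          · have := (t.only y h1 x hx.2 hxy.symm).2
            have := h.sub hX hx.1
            grind
          · exact h1
          · exact absurd h1 (Finset.disjoint_left.1 hXT hy))
        right; left
        simp only [h𝒜Q, Finset.mem_filter]
        exact ⟨hX, Finset.inter_eq_left.1 this⟩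
      · left
        simp only [h𝒜P, Finset.mem_filter]
        refine ⟨hX, fun v hv => ?_⟩
        rcases t.cov v with h1 | h1 | h1
        · exact h1
        · exact absurd ⟨v, by simp [hv, h1]⟩ hXQ
        · exact absurd h1 (Finset.disjoint_left.1 hXT hv)
    · right; right; simp [h𝒜T, hX, hXT]
  have csum : 𝒜.card ≤ 𝒜P.card + 𝒜Q.card + 𝒜T.card := by
    calc 𝒜.card ≤ (𝒜P ∪ 𝒜Q ∪ 𝒜T).card := by
          apply Finset.card_le_card; intro X hX; simp only [Finset.mem_union, or_assoc]
          exact cover X hX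
      _ ≤ _ := (Finset.card_union_le _ _).trans (by gcongr; exact Finset.card_union_le _ _)
  have cTle : 𝒜T.card ≤ (A ∩ T).card := by
    rw [← sum_inter h.hA h.disj T]; exact card_meet T
  have cN := h.cardN
  -- OF for P family
  have ofP : (∀ X ∈ 𝒜, Odd X.card) → OF G 𝒜P ((N ∩ P) ∪ (N ∩ T) ∪ {b}) := by
    intro hodd
    refine ⟨?_, ?_, ?_, ?_⟩
    · intro D hD E hE hne
      exact h.disj D (Finset.mem_filter.1 hD).1 E (Finset.mem_filter.1 hE).1 hne
    · intro D hD; exact hodd D (Finset.mem_filter.1 hD).1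
    · intro D hD
      have := Finset.disjoint_left.1 (h.dN D (Finset.mem_filter.1 hD).1)
      rw [Finset.disjoint_left]; intro v hv; simp; grind
    · intro D hD x hx y hxy
      rw [Finset.mem_filter] at hD
      rcases h.cl D hD.1 x hx y hxy with h1 | h1
      · exact Or.inl h1
      · right
        rcases t.cov y with h2 | h2 | h2
        · simp [h1, h2]
        · simp [(t.only x (hD.2 hx) y h2 hxy).2]
        · simp [h1, h2]
  have cSP : ((N ∩ P) ∪ (N ∩ T) ∪ {b}).card ≤ (N ∩ P).card + (N ∩ T).card + 1 := by
    refine (Finset.card_union_le _ _).trans ?_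
    have := Finset.card_union_le (N ∩ P) (N ∩ T)
    simp; omega
  have subP : ∀ D ∈ 𝒜P, D ⊆ A := fun D hD => h.sub (Finset.mem_filter.1 hD).1
  by_cases hQ : 𝒜Q.Nonempty
  · obtain ⟨X, hX⟩ := hQ
    have hX' := Finset.mem_filter.1 hX
    have hodd : ∀ X ∈ 𝒜, Odd X.card := by
      rcases h.par with h1 | h1
      · exact h1
      · obtain ⟨Y, hY⟩ := Finset.card_eq_one.1 h1
        obtain ⟨X1, hX1, haX1⟩ := (h.hA a).1 ha
        have e1 : X1 = X := by rw [hY] at hX1 hX'; simp at hX1 hX'; rw [hX1, hX'.1]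
        exact absurd (hX'.2 (e1 ▸ haX1)) (hPQ haP)
    have h1 := h.HO' 𝒜Q ((N ∩ Q) ∪ (N ∩ T)) (by
      refine ⟨?_, ?_, ?_, ?_⟩
      · intro D hD E hE hne
        exact h.disj D (Finset.mem_filter.1 hD).1 E (Finset.mem_filter.1 hE).1 hne
      · intro D hD; exact hodd D (Finset.mem_filter.1 hD).1
      · intro D hD
        have := Finset.disjoint_left.1 (h.dN D (Finset.mem_filter.1 hD).1)
        rw [Finset.disjoint_left]; intro v hv; simp; grind
      · intro D hD x hx y hxy
        rw [Finset.mem_filter] at hD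
        rcases h.cl D hD.1 x hx y hxy with h1 | h1
        · exact Or.inl h1
        · right
          rcases t.cov y with h2 | h2 | h2
          · have := (t.only y h2 x (hD.2 hx) hxy.symm).2
            have := h.sub hD.1 hx
            grind
          · simp [h1, h2]
          · simp [h1, h2]) ⟨X, hX⟩ (fun D hD => h.sub (Finset.mem_filter.1 hD).1)
      ⟨a, ha, fun D hD hh => hPQ haP ((Finset.mem_filter.1 hD).2 hh)⟩
    have h2 := Finset.card_union_le (N ∩ Q) (N ∩ T)
    by_cases hP : 𝒜P.Nonempty
    · obtain ⟨z, hz⟩ := h.nonemp X hX'.1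
      have h3 := h.HO' 𝒜P _ (ofP hodd) hP subP
        ⟨z, h.sub hX'.1 hz, fun D hD hh => hPQ ((Finset.mem_filter.1 hD).2 hh) (hX'.2 hz)⟩
      omega
    · rw [Finset.not_nonempty_iff_eq_empty] at hP
      rw [hP] at csum
      simp at csum
      omega
  · rw [Finset.not_nonempty_iff_eq_empty] at hQ
    rw [hQ] at csum cover
    simp only [Finset.card_empty] at csum
    by_cases hP : 𝒜P.Nonempty
    · obtain ⟨Y, hY, hcY⟩ := (h.hA c).1 hc
      have hYP : ¬ Y ⊆ P := fun hh => hca (t.only c (hh hcY) b hbQ hcb).1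
      obtain ⟨X, hX⟩ := hP
      have hX' := Finset.mem_filter.1 hX
      have hodd : ∀ X ∈ 𝒜, Odd X.card := by
        rcases h.par with h1 | h1
        · exact h1
        · obtain ⟨Z, hZ⟩ := Finset.card_eq_one.1 h1
          have e1 : Y = X := by rw [hZ] at hY hX'; simp at hY hX'; rw [hY, hX'.1]
          exact absurd hX'.2 (e1 ▸ hYP)
      have h3 := h.HO' 𝒜P _ (ofP hodd) ⟨X, hX⟩ subP ⟨c, hc, fun D hD hh => by
        have hD := Finset.mem_filter.1 hD
        by_cases e : D = Y
        · exact hYP (e ▸ hD.2)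
        · exact Finset.disjoint_left.1 (h.disj D hD.1 Y hY e) hh hcY⟩
      omega
    · rw [Finset.not_nonempty_iff_eq_empty] at hP
      rw [hP] at cover
      obtain ⟨X, hX, haX⟩ := (h.hA a).1 ha
      have hmeet : ∀ X ∈ 𝒜, 1 ≤ (X ∩ T).card := by
        intro X hX
        have := cover X hX
        simp only [Finset.notMem_empty, false_or, h𝒜T, Finset.mem_filter,
          Finset.disjoint_iff_inter_eq_empty] at this
        exact Finset.card_pos.2 (Finset.nonempty_iff_ne_empty.2 this.2)
      have s1 := sum_inter h.hA h.disj T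
      rw [← Finset.add_sum_erase _ _ hX] at s1
      have s2 : (𝒜.erase X).card ≤ ∑ x ∈ 𝒜.erase X, (x ∩ T).card := by
        calc _ = ∑ x ∈ 𝒜.erase X, 1 := by simp
          _ ≤ _ := Finset.sum_le_sum (fun Y hY => hmeet Y (Finset.mem_of_mem_erase hY))
      rw [Finset.card_erase_of_mem hX] at s2
      obtain ⟨w, hw⟩ := Finset.card_pos.1 (hmeet X hX)
      simp only [Finset.mem_inter] at hw
      obtain ⟨z, hz, hzb⟩ := degQ
      have hXN := Finset.disjoint_left.1 (h.dN X hX)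
      have hS : ((T ∩ X) ∪ ((N ∩ P) ∪ (N ∩ T) ∪ {b})).card ≤ (X ∩ T).card +
          ((N ∩ P).card + (N ∩ T).card + 1) := by
        refine (Finset.card_union_le _ _).trans ?_
        rw [Finset.inter_comm T X]; omega
      have h3 := h.HE (X ∩ P) ((T ∩ X) ∪ ((N ∩ P) ∪ (N ∩ T) ∪ {b})) ⟨a, by simp [haX, haP]⟩
        (by rw [Finset.disjoint_left]; intro v; simp; grind)
        (by
          intro x hx y hxy
          simp only [Finset.mem_inter] at hx
          simp only [Finset.mem_union, Finset.mem_inter, Finset.mem_singleton]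
          have h2 := h.cl X hX x hx.1 y hxy
          rcases t.cov y with h1 | h1 | h1
          · tauto
          · have := (t.only x hx.2 y h1 hxy).2; tauto
          · tauto)
        ⟨z, by simp; grind, by simp; grind⟩
        (by
          apply Finset.card_lt_card
          rw [Finset.ssubset_iff_of_subset (Finset.inter_subset_left.trans (h.sub hX))]
          exact ⟨w, h.sub hX hw.1, by simp; grind⟩)
      have := h.ne.card_pos
      omega

end core


section core
variable {V : Type*} [DecidableEq V]

def xs (𝒜 : Finset (Finset V)) (D : Finset V) : Finset (Finset V) := 𝒜.filter (fun X => X ⊆ D)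
def D0 (𝒜 : Finset (Finset V)) (N : Finset V) (𝒟 : Finset (Finset V)) : Finset (Finset V) :=
  𝒟.filter (fun D => (N ∩ D).Nonempty ∨ (xs 𝒜 D).Nonempty)
def D1 (𝒜 : Finset (Finset V)) (N A : Finset V) (𝒟 : Finset (Finset V)) : Finset (Finset V) :=
  𝒟.filter (fun D => ¬ ((N ∩ D).Nonempty ∨ (xs 𝒜 D).Nonempty) ∧ (A ∩ D).Nonempty)
def D2 (N A : Finset V) (𝒟 : Finset (Finset V)) : Finset (Finset V) :=
  𝒟.filter (fun D => ¬ (A ∩ D).Nonempty ∧ ¬ (N ∩ D).Nonempty)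
def M1 (𝒜 : Finset (Finset V)) (T : Finset V) : Finset (Finset V) :=
  𝒜.filter (fun X => ¬ Disjoint X T)

/-- The type I context. -/
structure Ctx (G : SimpleGraph V) (𝒜 : Finset (Finset V)) (N A : Finset V) (a b c : V)
    (𝒟 : Finset (Finset V)) (T D₁ D₂ : Finset V) : Prop where
  hB : Base G
  h : MinFrag G 𝒜 N A
  ha : a ∈ A
  hb : b ∈ N
  hc : c ∈ A
  hca : c ≠ a
  hcb : G.Adj c b
  t : TI G a b 𝒟 T D₁ D₂

variable {G : SimpleGraph V} {𝒜 : Finset (Finset V)} {N A : Finset V} {a b c : V}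
    {𝒟 : Finset (Finset V)} {T E₁ E₂ : Finset V}

theorem Ctx.bA (k : Ctx G 𝒜 N A a b c 𝒟 T E₁ E₂) : b ∉ A :=
  fun h => Finset.disjoint_left.1 k.h.AN h k.hb

theorem Ctx.aN (k : Ctx G 𝒜 N A a b c 𝒟 T E₁ E₂) : a ∉ N :=
  fun h => Finset.disjoint_left.1 k.h.AN k.ha h

theorem Ctx.uniq (k : Ctx G 𝒜 N A a b c 𝒟 T E₁ E₂) {D E} (hD : D ∈ 𝒟) (hE : E ∈ 𝒟) {v} (h1 : v ∈ D)
    (h2 : v ∈ E) : D = E := by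
  by_contra hne
  exact Finset.disjoint_left.1 (k.t.disj D hD E hE hne) h1 h2

theorem Ctx.uniqA (k : Ctx G 𝒜 N A a b c 𝒟 T E₁ E₂) {D E} (hD : D ∈ 𝒜) (hE : E ∈ 𝒜) {v} (h1 : v ∈ D)
    (h2 : v ∈ E) : D = E := by
  by_contra hne
  exact Finset.disjoint_left.1 (k.h.disj D hD E hE hne) h1 h2

/-- neighbours of a vertex of `A` -/
theorem Ctx.clA (k : Ctx G 𝒜 N A a b c 𝒟 T E₁ E₂) {D x y} (hD : D ∈ 𝒟) (hx : x ∈ D) (hxA : x ∈ A)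
    (hxy : G.Adj x y) : y ∈ D ∨ y ∈ T ∨ (x = a ∧ y = b ∧ D = E₁) := by
  rcases k.t.cl D hD x hx y hxy with h | h | h | h
  · exact Or.inl h
  · exact Or.inr (Or.inl h)
  · exact Or.inr (Or.inr ⟨h.1, h.2, k.uniq hD k.t.h1 hx (h.1 ▸ k.t.ha)⟩)
  · exact absurd hxA (h.1 ▸ k.bA)

/-- neighbours of a vertex outside `A`, `N` -/
theorem Ctx.clZ (k : Ctx G 𝒜 N A a b c 𝒟 T E₁ E₂) {D x y} (hD : D ∈ 𝒟) (hx : x ∈ D) (hxA : x ∉ A)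
    (hxN : x ∉ N) (hxy : G.Adj x y) : y ∉ A ∧ (y ∈ D ∨ y ∈ T) := by
  refine ⟨fun hyA => by rcases k.h.clA hyA hxy.symm with h1 | h1 <;> tauto, ?_⟩
  rcases k.t.cl D hD x hx y hxy with h | h | h | h
  · exact Or.inl h
  · exact Or.inr h
  · exact absurd k.ha (h.1 ▸ hxA)
  · exact absurd k.hb (h.1 ▸ hxN)

theorem Ctx.inD (k : Ctx G 𝒜 N A a b c 𝒟 T E₁ E₂) {X} (hX : X ∈ 𝒜) (hXT : Disjoint X T) :
    ∃ D ∈ 𝒟, X ⊆ D := by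
  obtain ⟨x, hx⟩ := k.h.nonemp X hX
  rcases k.t.cov x with h | ⟨D, hD, hxD⟩
  · exact absurd h (Finset.disjoint_left.1 hXT hx)
  refine ⟨D, hD, ?_⟩
  have := k.h.conn X hX (X ∩ D) Finset.inter_subset_left ⟨x, by simp [hx, hxD]⟩ (by
    intro u hu y hy huy
    simp only [Finset.mem_inter] at hu ⊢
    refine ⟨hy, ?_⟩
    rcases k.clA hD hu.2 (k.h.sub hX hu.1) huy with h | h | h
    · exact h
    · exact absurd h (Finset.disjoint_left.1 hXT hy)
    · exact absurd (k.h.sub hX hy) (h.2.1 ▸ k.bA))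
  exact Finset.inter_eq_left.1 this

theorem Ctx.sum_part (k : Ctx G 𝒜 N A a b c 𝒟 T E₁ E₂) (Y : Finset V) :
    ∑ D ∈ 𝒟, (Y ∩ D).card + (Y ∩ T).card = Y.card := by
  have : ∑ D ∈ 𝒟, (Y ∩ D).card = (Y \ T).card := by
    rw [← Finset.card_biUnion]
    · congr 1; ext v
      simp only [Finset.mem_biUnion, Finset.mem_inter, Finset.mem_sdiff]
      constructor
      · rintro ⟨D, hD, h1, h2⟩
        exact ⟨h1, Finset.disjoint_left.1 (k.t.dT D hD) h2⟩
      · rintro ⟨h1, h2⟩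
        rcases k.t.cov v with h | ⟨D, hD, hxD⟩
        · exact absurd h h2
        · exact ⟨D, hD, h1, hxD⟩
    · intro X hX Y' hY hne
      exact (k.t.disj X hX Y' hY hne).mono Finset.inter_subset_right Finset.inter_subset_right
  rw [this]; exact Finset.card_sdiff_add_card_inter Y T

theorem Ctx.xs_disj (k : Ctx G 𝒜 N A a b c 𝒟 T E₁ E₂) {D E} (hD : D ∈ 𝒟) (hE : E ∈ 𝒟) (hne : D ≠ E) :
    Disjoint (xs 𝒜 D) (xs 𝒜 E) := by
  rw [Finset.disjoint_left]
  intro X hX hX2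
  simp only [xs, Finset.mem_filter] at hX hX2
  obtain ⟨x, hx⟩ := k.h.nonemp X hX.1
  exact hne (k.uniq hD hE (hX.2 hx) (hX2.2 hx))

theorem Ctx.sum_xs (k : Ctx G 𝒜 N A a b c 𝒟 T E₁ E₂) (𝒥 : Finset (Finset V)) (hJ : 𝒥 ⊆ 𝒟) :
    (𝒥.biUnion (xs 𝒜)).card = ∑ D ∈ 𝒥, (xs 𝒜 D).card :=
  Finset.card_biUnion (fun _ hD _ hE hne => k.xs_disj (hJ hD) (hJ hE) hne)

theorem Ctx.sum_xs_ge (k : Ctx G 𝒜 N A a b c 𝒟 T E₁ E₂) :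
    𝒜.card ≤ ∑ D ∈ 𝒟, (xs 𝒜 D).card + (M1 𝒜 T).card := by
  rw [← k.sum_xs 𝒟 subset_rfl]
  refine (Finset.card_le_card ?_).trans (Finset.card_union_le _ _)
  intro X hX
  simp only [Finset.mem_union, Finset.mem_biUnion, xs, M1, Finset.mem_filter]
  by_cases hXT : Disjoint X T
  · obtain ⟨D, hD, h⟩ := k.inD hX hXT
    exact Or.inl ⟨D, hD, hX, h⟩
  · exact Or.inr ⟨hX, hXT⟩

theorem Ctx.cards (k : Ctx G 𝒜 N A a b c 𝒟 T E₁ E₂) :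
    (D0 𝒜 N 𝒟).card + (D1 𝒜 N A 𝒟).card + (D2 N A 𝒟).card = 𝒟.card := by
  rw [← Finset.card_union_of_disjoint, ← Finset.card_union_of_disjoint]
  · congr 1; ext D
    have : (xs 𝒜 D).Nonempty → (A ∩ D).Nonempty := by
      rintro ⟨X, hX⟩
      simp only [xs, Finset.mem_filter] at hX
      obtain ⟨x, hx⟩ := k.h.nonemp X hX.1
      exact ⟨x, by simp [k.h.sub hX.1 hx, hX.2 hx]⟩
    simp only [D0, D1, D2, Finset.mem_union, Finset.mem_filter]
    tauto
  · rw [Finset.disjoint_left]; intro D hD hD2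
    simp only [D0, D1, D2, Finset.mem_union, Finset.mem_filter] at hD hD2
    have : (xs 𝒜 D).Nonempty → (A ∩ D).Nonempty := by
      rintro ⟨X, hX⟩
      simp only [xs, Finset.mem_filter] at hX
      obtain ⟨x, hx⟩ := k.h.nonemp X hX.1
      exact ⟨x, by simp [k.h.sub hX.1 hx, hX.2 hx]⟩
    tauto
  · rw [Finset.disjoint_left]; intro D hD hD2
    simp only [D0, D1, Finset.mem_filter] at hD hD2
    tauto

theorem Ctx.six (k : Ctx G 𝒜 N A a b c 𝒟 T E₁ E₂) :
    (2 ≤ (T \ A).card ∧ (D2 N A 𝒟).card + 2 ≤ (T \ A).card) ∨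
    ((T \ A).card ≤ 1 ∧ (D2 N A 𝒟).card = 0) := by
  have key : ∀ D ∈ D2 N A 𝒟, D ∈ 𝒟 ∧ (∀ x ∈ D, x ∉ A ∧ x ∉ N) := by
    intro D hD
    simp only [D2, Finset.mem_filter] at hD
    refine ⟨hD.1, fun x hx => ⟨fun hA => hD.2.1 ⟨x, by simp [hA, hx]⟩,
      fun hA => hD.2.2 ⟨x, by simp [hA, hx]⟩⟩⟩
  have hcl : ∀ D ∈ D2 N A 𝒟, Cl G D (T \ A) := by
    intro D hD x hx y hxy
    obtain ⟨h1, h2⟩ := key D hD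
    have := k.clZ h1 hx (h2 x hx).1 (h2 x hx).2 hxy
    simp only [Finset.mem_sdiff]; tauto
  have hd : ∀ D ∈ D2 N A 𝒟, Disjoint D (T \ A) := by
    intro D hD
    exact (k.t.dT D (key D hD).1).mono_right Finset.sdiff_subset
  by_cases h2 : 2 ≤ (T \ A).card
  · refine Or.inl ⟨h2, k.hB.B _ _ ⟨?_, ?_, hd, hcl⟩ h2⟩
    · intro D hD E hE; exact k.t.disj D (key D hD).1 E (key E hE).1
    · intro D hD; exact k.t.odd D (key D hD).1
  · refine Or.inr ⟨by omega, ?_⟩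
    rw [Finset.card_eq_zero, Finset.eq_empty_iff_forall_notMem]
    intro D hD
    have := k.hB.C D (T \ A) (Finset.card_pos.1 (k.t.odd D (key D hD).1).pos) (hd D hD) (hcl D hD)
      ⟨a, fun h => ((key D hD).2 a h).1 k.ha, by simp [k.ha]⟩
    omega

theorem Ctx.F1 (k : Ctx G 𝒜 N A a b c 𝒟 T E₁ E₂) :
    A.card ≤ ∑ D ∈ 𝒟.erase E₁, D.card := by
  by_contra hlt
  have hsub : ∀ D ∈ 𝒟.erase E₁, D ∈ 𝒟 ∧ a ∉ D := by
    intro D hD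
    rw [Finset.mem_erase] at hD
    exact ⟨hD.2, fun h => hD.1 (k.uniq hD.2 k.t.h1 h k.t.ha)⟩
  have := k.h.HO (𝒟.erase E₁) (T ∪ {a}) ⟨?_, ?_, ?_, ?_⟩
    ⟨E₂, by simp [k.t.h2, k.t.ne.symm]⟩ (by
      rw [Finset.card_biUnion]
      · simpa using hlt
      · intro D hD E hE; exact k.t.disj D (hsub D hD).1 E (hsub E hE).1)
  · have h1 := Finset.card_union_le T {a}
    rw [Finset.card_singleton] at h1
    rw [Finset.card_erase_of_mem k.t.h1] at this
    have := k.t.card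
    omega
  · intro D hD E hE; exact k.t.disj D (hsub D hD).1 E (hsub E hE).1
  · intro D hD; exact k.t.odd D (hsub D hD).1
  · intro D hD
    rw [Finset.disjoint_union_right]
    exact ⟨k.t.dT D (hsub D hD).1, by simpa using (hsub D hD).2⟩
  · intro D hD x hx y hxy
    rcases k.t.cl D (hsub D hD).1 x hx y hxy with h | h | h | h
    · exact Or.inl h
    · right; simp [h]
    · exact absurd (h.1 ▸ hx) (hsub D hD).2
    · right; simp [h.2]

theorem Ctx.T_split (_k : Ctx G 𝒜 N A a b c 𝒟 T E₁ E₂) : (T \ A).card + (A ∩ T).card = T.card := by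
  rw [Finset.inter_comm]; exact Finset.card_sdiff_add_card_inter T A

theorem Ctx.nu_le (k : Ctx G 𝒜 N A a b c 𝒟 T E₁ E₂) : (N ∩ T).card ≤ (T \ A).card := by
  apply Finset.card_le_card
  intro v hv
  simp only [Finset.mem_inter, Finset.mem_sdiff] at hv ⊢
  exact ⟨hv.2, fun h => Finset.disjoint_left.1 k.h.AN h hv.1⟩

theorem Ctx.conclude (k : Ctx G 𝒜 N A a b c 𝒟 T E₁ E₂)
    (K1 : ∀ D ∈ D0 𝒜 N 𝒟, (xs 𝒜 D).card + 1 ≤ (N ∩ D).card)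
    (K2 : ∀ D ∈ D0 𝒜 N 𝒟, D ≠ E₁ → (xs 𝒜 D).card ≠ 0 →
      (xs 𝒜 D).card + 3 ≤ (N ∩ D).card + (N ∩ T).card)
    (K3 : (N ∩ T).card ≤ 1)
    (K4 : (D1 𝒜 N A 𝒟).card + (M1 𝒜 T).card ≤ (A ∩ T).card)
    (K5 : (N ∩ T).card = 0 → (E₁ ∈ D0 𝒜 N 𝒟 ∧ (xs 𝒜 E₁).card + 2 ≤ (N ∩ E₁).card) ∨
      (D1 𝒜 N A 𝒟).card + (M1 𝒜 T).card + 1 ≤ (A ∩ T).card) : False := by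
  have cN := k.h.cardN
  have sN := k.sum_part N
  have sA := k.sum_part A
  have sx := k.sum_xs_ge
  have hc := k.cards
  have h6 := k.six
  have hF := k.F1
  have hT := k.T_split
  have hν := k.nu_le
  have hTl := k.t.card
  set s : Finset V → ℤ := fun D => ((N ∩ D).card : ℤ) - (xs 𝒜 D).card -
    (if D ∈ D0 𝒜 N 𝒟 then 1 else 0) with hs
  have n0 : ∀ D ∈ 𝒟, D ∉ D0 𝒜 N 𝒟 → (N ∩ D).card = 0 ∧ (xs 𝒜 D).card = 0 := by
    intro D hD h0
    simp only [D0, Finset.mem_filter, not_and, not_or, Finset.not_nonempty_iff_eq_empty] at h0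
    obtain ⟨h1, h2⟩ := h0 hD
    simp [h1, h2]
  have s0 : ∀ D ∈ 𝒟, 0 ≤ s D := by
    intro D hD
    by_cases h0 : D ∈ D0 𝒜 N 𝒟
    · have := K1 D h0
      simp only [hs, h0, if_true]; omega
    · obtain ⟨h1, h2⟩ := n0 D hD h0
      simp [hs, h0, h1, h2]
  have ssum : ∑ D ∈ 𝒟, s D = ∑ D ∈ 𝒟, ((N ∩ D).card : ℤ) - ∑ D ∈ 𝒟, ((xs 𝒜 D).card : ℤ)
      - (D0 𝒜 N 𝒟).card := by
    simp only [hs, Finset.sum_sub_distrib]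
    congr 1
    rw [Finset.sum_ite_mem, Finset.inter_eq_right.2 (show D0 𝒜 N 𝒟 ⊆ 𝒟 from Finset.filter_subset _ _)]
    simp
  have sE := Finset.add_sum_erase 𝒟 s k.t.h1
  have s1 := s0 E₁ k.t.h1
  have sE0 : 0 ≤ ∑ D ∈ 𝒟.erase E₁, s D :=
    Finset.sum_nonneg (fun D hD => s0 D (Finset.mem_of_mem_erase hD))
  have R : ∑ D ∈ 𝒟.erase E₁, s D ≤ ((A ∩ T).card : ℤ) + 1 - (D0 𝒜 N 𝒟).card - (D1 𝒜 N A 𝒟).card := by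
    zify at cN sN sx K4
    by_cases hν0 : (N ∩ T).card = 0
    · rcases K5 hν0 with ⟨h1, h2⟩ | h1
      · have : 1 ≤ s E₁ := by simp only [hs, h1, if_true]; omega
        rw [hν0] at sN
        push_cast at sN
        linarith
      · zify at h1
        rw [hν0] at sN
        push_cast at sN
        linarith
    · have : (1 : ℤ) ≤ (N ∩ T).card := by omega
      linarith
  rcases h6 with ⟨h2, h3⟩ | ⟨h2, h3⟩
  · omega
  · have R' : ∑ D ∈ 𝒟.erase E₁, s D ≤ 1 - ((T \ A).card : ℤ) := by omega
    have sle : ∀ D ∈ 𝒟.erase E₁, s D ≤ 1 - ((T \ A).card : ℤ) := by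
      intro D hD
      refine le_trans ?_ R'
      exact Finset.single_le_sum (f := s) (fun D hD => s0 D (Finset.mem_of_mem_erase hD)) hD
    have nD : ∀ D ∈ 𝒟.erase E₁, ((N ∩ D).card : ℤ) ≤ s D + 1 := by
      intro D hD
      by_cases h0 : D ∈ D0 𝒜 N 𝒟
      · have hle := sle D hD
        have k2 := K2 D h0 (Finset.ne_of_mem_erase hD)
        simp only [hs, h0, if_true] at hle ⊢
        omega
      · obtain ⟨h1, h2⟩ := n0 D (Finset.mem_of_mem_erase hD) h0
        have := s0 D (Finset.mem_of_mem_erase hD)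
        omega
    have DD : ∀ D ∈ 𝒟.erase E₁, D.card ≤ (A ∩ D).card + (N ∩ D).card := by
      intro D hD
      have hD' := Finset.mem_of_mem_erase hD
      have hZ : ¬ (D \ (A ∪ N)).Nonempty := by
        intro hne
        have := k.hB.C (D \ (A ∪ N)) ((N ∩ D) ∪ (T \ A)) hne
          (by
            have := Finset.disjoint_left.1 (k.t.dT D hD')
            rw [Finset.disjoint_left]; intro v
            simp only [Finset.mem_union, Finset.mem_sdiff, Finset.mem_inter]
            have := @this v
            tauto)
          (by
            intro x hx y hy
            simp only [Finset.mem_sdiff, Finset.mem_union, not_or] at hx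
            have := k.clZ hD' hx.1 hx.2.1 hx.2.2 hy
            simp only [Finset.mem_union, Finset.mem_sdiff, Finset.mem_inter]
            tauto)
          ⟨a, by simp [k.ha], by simp [k.ha, k.aN]⟩
        have := Finset.card_union_le (N ∩ D) (T \ A)
        have := nD D hD
        have := sle D hD
        omega
      refine (Finset.card_le_card ?_).trans (Finset.card_union_le _ _)
      intro v hv
      by_contra hcon
      exact hZ ⟨v, by simp at hcon ⊢; tauto⟩
    have f1 : ∑ D ∈ 𝒟.erase E₁, D.card ≤
        ∑ D ∈ 𝒟.erase E₁, (A ∩ D).card + ∑ D ∈ 𝒟.erase E₁, (N ∩ D).card := by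
      rw [← Finset.sum_add_distrib]; exact Finset.sum_le_sum DD
    have f2 : ∑ D ∈ 𝒟.erase E₁, ((N ∩ D).card : ℤ) ≤ ∑ D ∈ 𝒟.erase E₁, s D + (𝒟.card - 1) := by
      refine (Finset.sum_le_sum nD).trans ?_
      rw [Finset.sum_add_distrib]
      have h := Finset.card_erase_add_one k.t.h1
      zify at h
      simp only [Finset.sum_const, nsmul_eq_mul, mul_one]
      linarith
    have f3 := Finset.add_sum_erase 𝒟 (fun D => (A ∩ D).card) k.t.h1
    have f4 : 1 ≤ (A ∩ E₁).card := Finset.card_pos.2 ⟨a, by simp [k.ha, k.t.ha]⟩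
    zify at f1 f3 hF sA f4 hT hTl
    linarith

end core


section core
variable {V : Type*} [DecidableEq V]
variable {G : SimpleGraph V} {𝒜 : Finset (Finset V)} {N A : Finset V} {a b c : V}
    {𝒟 : Finset (Finset V)} {T E₁ E₂ : Finset V}

theorem Ctx.c_in (k : Ctx G 𝒜 N A a b c 𝒟 T E₁ E₂) {D} (hD : D ∈ 𝒟) (hc : c ∈ D) : D = E₂ := by
  rcases k.clA hD hc k.hc k.hcb with h | h | h
  · exact k.uniq hD k.t.h2 h k.t.hb
  · exact absurd h (Finset.disjoint_left.1 (k.t.dT E₂ k.t.h2) k.t.hb)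
  · exact absurd h.1 k.hca

theorem Ctx.D1_sub (k : Ctx G 𝒜 N A a b c 𝒟 T E₁ E₂) {D} (hD : D ∈ D1 𝒜 N A 𝒟) :
    D ∈ 𝒟 ∧ ∃ X ∈ M1 𝒜 T, D ⊆ X := by
  simp only [D1, Finset.mem_filter, not_or] at hD
  obtain ⟨hD, ⟨h1, h2⟩, x, hx⟩ := hD
  refine ⟨hD, ?_⟩
  simp only [Finset.mem_inter] at hx
  obtain ⟨X, hX, hxX⟩ := (k.h.hA x).1 hx.1
  have hDX : D ⊆ X := by
    have := k.t.conn D hD (D ∩ X) Finset.inter_subset_left ⟨x, by simp [hx.2, hxX]⟩ (by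
      intro u hu y hy huy
      simp only [Finset.mem_inter] at hu ⊢
      refine ⟨hy, ?_⟩
      rcases k.h.cl X hX u hu.2 y huy with h | h
      · exact h
      · exact absurd ⟨y, by simp [h, hy]⟩ h1)
    exact Finset.inter_eq_left.1 this
  refine ⟨X, ?_, hDX⟩
  simp only [M1, Finset.mem_filter]
  refine ⟨hX, fun hd => ?_⟩
  obtain ⟨D', hD', h'⟩ := k.inD hX hd
  have := k.uniq hD hD' hx.2 (h' hxX)
  subst this
  exact h2 ⟨X, by simp [xs, hX, h']⟩

theorem Ctx.two (k : Ctx G 𝒜 N A a b c 𝒟 T E₁ E₂) : 2 ≤ T.card := by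
  rw [k.t.card]
  exact Finset.one_lt_card.2 ⟨E₁, k.t.h1, E₂, k.t.h2, k.t.ne⟩

theorem Ctx.bT (k : Ctx G 𝒜 N A a b c 𝒟 T E₁ E₂) : b ∉ T :=
  Finset.disjoint_left.1 (k.t.dT E₂ k.t.h2) k.t.hb

theorem Ctx.HE1 (k : Ctx G 𝒜 N A a b c 𝒟 T E₁ E₂) {X} (hX : X ∈ 𝒜) (haX : a ∈ X)
    (h1 : (X ∩ T).card = 1) (hν : (N ∩ T).card = 0) : 2 ≤ (N ∩ E₁).card := by
  have hν' : ∀ v, v ∈ N → v ∉ T := by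
    rw [Finset.card_eq_zero] at hν
    intro v h1 h2
    have : v ∈ N ∩ T := by simp [h1, h2]
    simp [hν] at this
  obtain ⟨z, hz⟩ : (T \ X).Nonempty := by
    rw [← Finset.card_pos]
    have := Finset.card_sdiff_add_card_inter T X
    rw [Finset.inter_comm T X] at this
    have := k.two
    omega
  simp only [Finset.mem_sdiff] at hz
  obtain ⟨w, hw⟩ := Finset.card_pos.1 (by omega : 0 < (X ∩ T).card)
  simp only [Finset.mem_inter] at hw
  have hXN := Finset.disjoint_left.1 (k.h.dN X hX)
  have hET := Finset.disjoint_left.1 (k.t.dT E₁ k.t.h1)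
  have := k.h.HE (X ∩ E₁) ((X ∩ T) ∪ (N ∩ E₁) ∪ {b}) ⟨a, by simp [haX, k.t.ha]⟩
    (by
      rw [Finset.disjoint_left]; intro v
      have := @hXN v; have := @hET v
      have hb := k.bA
      have := @k.h.sub _ _ _ _ _ _ _ hX v
      simp only [Finset.mem_union, Finset.mem_inter, Finset.mem_singleton]
      grind)
    (by
      intro x hx y hxy
      simp only [Finset.mem_inter] at hx
      simp only [Finset.mem_union, Finset.mem_inter, Finset.mem_singleton]
      have h2 := k.h.cl X hX x hx.1 y hxy
      have h3 := k.clA k.t.h1 hx.2 (k.h.sub hX hx.1) hxy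
      have := hν' y
      tauto)
    ⟨z, by simp [hz], by
      have := hν' z
      have h4 : z ≠ b := fun e => k.bT (e ▸ hz.1)
      simp only [Finset.mem_union, Finset.mem_inter, Finset.mem_singleton]; tauto⟩
    (by
      apply Finset.card_lt_card
      rw [Finset.ssubset_iff_of_subset (Finset.inter_subset_left.trans (k.h.sub hX))]
      refine ⟨w, k.h.sub hX hw.1, fun h => hET (Finset.mem_inter.1 h).2 hw.2⟩)
  have h5 := Finset.card_union_le ((X ∩ T) ∪ (N ∩ E₁)) {b}
  have h6 := Finset.card_union_le (X ∩ T) (N ∩ E₁)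
  rw [Finset.card_singleton] at h5
  omega

theorem Ctx.E1_mem (k : Ctx G 𝒜 N A a b c 𝒟 T E₁ E₂) : E₁ ∈ D0 𝒜 N 𝒟 ∨ E₁ ∈ D1 𝒜 N A 𝒟 := by
  have : (A ∩ E₁).Nonempty := ⟨a, by simp [k.ha, k.t.ha]⟩
  have := k.t.h1
  simp only [D0, D1, Finset.mem_filter]
  tauto

theorem Ctx.case_one (k : Ctx G 𝒜 N A a b c 𝒟 T E₁ E₂) (hp : 𝒜.card = 1) : False := by
  obtain ⟨X, hX⟩ := Finset.card_eq_one.1 hp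
  have hXA : X = A := by ext v; rw [k.h.hA]; simp [hX]
  subst hXA
  have hXm : X ∈ 𝒜 := by simp [hX]
  have hmeet : ¬ Disjoint X T := by
    intro hd
    obtain ⟨D, hD, hXD⟩ := k.inD hXm hd
    have h1 := k.c_in hD (hXD k.hc)
    have h2 := k.uniq hD k.t.h1 (hXD k.ha) k.t.ha
    exact k.t.ne (h2.symm.trans h1)
  have hM : (M1 𝒜 T).card = 1 := by
    have : M1 𝒜 T = 𝒜 := by
      rw [M1, Finset.filter_eq_self]; intro Y hY; rw [hX] at hY; simp at hY; rwa [hY]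
    rw [this, hp]
  have hxs : ∀ D ∈ 𝒟, xs 𝒜 D = ∅ := by
    intro D hD
    rw [Finset.eq_empty_iff_forall_notMem]
    intro Y hY
    simp only [xs, hX, Finset.mem_filter, Finset.mem_singleton] at hY
    exact hmeet ((k.t.dT D hD).mono_left (hY.1 ▸ hY.2))
  have τ1 : 1 ≤ (X ∩ T).card := by
    rw [Finset.disjoint_iff_inter_eq_empty] at hmeet
    exact Finset.card_pos.2 (Finset.nonempty_iff_ne_empty.2 hmeet)
  have hD0 : ∀ D ∈ D0 𝒜 N 𝒟, D ∈ 𝒟 ∧ 1 ≤ (N ∩ D).card := by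
    intro D hD
    simp only [D0, Finset.mem_filter] at hD
    rw [hxs D hD.1] at hD
    exact ⟨hD.1, Finset.card_pos.2 (by simpa using hD.2)⟩
  have hHO : (D1 𝒜 N X 𝒟).Nonempty → (D1 𝒜 N X 𝒟).card + 2 ≤ (X ∩ T).card + (N ∩ T).card := by
    intro hne
    have hsub : ∀ D ∈ D1 𝒜 N X 𝒟, D ∈ 𝒟 ∧ D ⊆ X := by
      intro D hD
      obtain ⟨h1, Y, hY, h2⟩ := k.D1_sub hD
      simp only [M1, hX, Finset.mem_filter, Finset.mem_singleton] at hY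
      exact ⟨h1, hY.1 ▸ h2⟩
    obtain ⟨w, hw⟩ := Finset.card_pos.1 τ1
    simp only [Finset.mem_inter] at hw
    have := k.h.HO' (D1 𝒜 N X 𝒟) ((X ∩ T) ∪ (N ∩ T) ∪ {b}) ⟨?_, ?_, ?_, ?_⟩ hne
      (fun D hD => (hsub D hD).2) ⟨w, hw.1, fun D hD h =>
        Finset.disjoint_left.1 (k.t.dT D (hsub D hD).1) h hw.2⟩
    · have h5 := Finset.card_union_le ((X ∩ T) ∪ (N ∩ T)) {b}
      have h6 := Finset.card_union_le (X ∩ T) (N ∩ T)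
      rw [Finset.card_singleton] at h5
      omega
    · intro D hD E hE; exact k.t.disj D (hsub D hD).1 E (hsub E hE).1
    · intro D hD; exact k.t.odd D (hsub D hD).1
    · intro D hD
      have hDT := Finset.disjoint_left.1 (k.t.dT D (hsub D hD).1)
      have hs := (hsub D hD).2
      have hb := k.bA
      rw [Finset.disjoint_left]; intro v hv
      have := hDT hv
      have := hs hv
      simp only [Finset.mem_union, Finset.mem_inter, Finset.mem_singleton]
      grind
    · intro D hD x hx y hxy
      simp only [Finset.mem_union, Finset.mem_inter, Finset.mem_singleton]
      have h1 := k.clA (hsub D hD).1 hx ((hsub D hD).2 hx) hxy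
      have h2 := k.h.clA ((hsub D hD).2 hx) hxy
      tauto
  have K3 : (N ∩ T).card ≤ 1 := by
    by_contra hν
    have h1 := k.nu_le
    have h2 := k.six
    have h3 := k.cards
    have h4 := k.T_split
    have h5 := k.t.card
    have h6 := k.sum_part N
    have h7 := k.h.cardN
    have h8 : (D0 𝒜 N 𝒟).card ≤ ∑ D ∈ 𝒟, (N ∩ D).card := by
      calc _ = ∑ D ∈ D0 𝒜 N 𝒟, 1 := by simp
        _ ≤ ∑ D ∈ D0 𝒜 N 𝒟, (N ∩ D).card := Finset.sum_le_sum (fun D hD => (hD0 D hD).2)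
        _ ≤ _ := Finset.sum_le_sum_of_subset (Finset.filter_subset _ _)
    by_cases hne : (D1 𝒜 N X 𝒟).Nonempty
    · have := hHO hne
      omega
    · rw [Finset.not_nonempty_iff_eq_empty] at hne
      rw [hne, Finset.card_empty] at h3
      omega
  refine k.conclude ?_ ?_ K3 ?_ ?_
  · intro D hD
    obtain ⟨h1, h2⟩ := hD0 D hD
    rw [hxs D h1, Finset.card_empty]; omega
  · intro D hD _ h
    exact absurd (by rw [hxs D (hD0 D hD).1]; rfl) h
  · by_cases hne : (D1 𝒜 N X 𝒟).Nonempty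
    · have := hHO hne
      omega
    · rw [Finset.not_nonempty_iff_eq_empty] at hne
      rw [hne, Finset.card_empty]
      omega
  · intro hν
    by_cases hne : (D1 𝒜 N X 𝒟).Nonempty
    · have := hHO hne
      omega
    · rw [Finset.not_nonempty_iff_eq_empty] at hne
      rw [hne, Finset.card_empty]
      by_cases hτ : 2 ≤ (X ∩ T).card
      · right; omega
      · left
        have h1 := k.HE1 hXm k.ha (by omega) hν
        rcases k.E1_mem with h2 | h2
        · refine ⟨h2, ?_⟩
          rw [hxs E₁ k.t.h1]; simpa using h1
        · simp [hne] at h2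

end core


section core
variable {V : Type*} [DecidableEq V]
variable {G : SimpleGraph V} {𝒜 : Finset (Finset V)} {N A : Finset V} {a b c : V}
    {𝒟 : Finset (Finset V)} {T E₁ E₂ : Finset V}

theorem mem_xs {X D : Finset V} : X ∈ xs 𝒜 D ↔ X ∈ 𝒜 ∧ X ⊆ D := by simp [xs]

theorem Ctx.ofJ (k : Ctx G 𝒜 N A a b c 𝒟 T E₁ E₂) (hodd : ∀ X ∈ 𝒜, Odd X.card)
    {𝒥 : Finset (Finset V)} (hJ : 𝒥 ⊆ 𝒟) {S : Finset V} (h1 : ∀ D ∈ 𝒥, N ∩ D ⊆ S)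
    (h2 : N ∩ T ⊆ S) (h3 : E₁ ∈ 𝒥 → b ∈ S) (hS : S ⊆ N) : OF G (𝒥.biUnion (xs 𝒜)) S := by
  have key : ∀ X ∈ 𝒥.biUnion (xs 𝒜), X ∈ 𝒜 ∧ ∃ D ∈ 𝒥, X ⊆ D := by
    intro X hX
    simp only [Finset.mem_biUnion, mem_xs] at hX
    obtain ⟨D, h1, h2, h3⟩ := hX
    exact ⟨h2, D, h1, h3⟩
  refine ⟨?_, ?_, ?_, ?_⟩
  · intro D hD E hE; exact k.h.disj D (key D hD).1 E (key E hE).1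
  · intro D hD; exact hodd D (key D hD).1
  · intro D hD; exact (k.h.dN D (key D hD).1).mono_right hS
  · intro X hX x hx y hxy
    obtain ⟨hX, D, hD, hXD⟩ := key X hX
    rcases k.h.cl X hX x hx y hxy with h | h
    · exact Or.inl h
    · right
      rcases k.clA (hJ hD) (hXD hx) (k.h.sub hX hx) hxy with h4 | h4 | h4
      · exact h1 D hD (by simp [h, h4])
      · exact h2 (by simp [h, h4])
      · rw [h4.2.1]; exact h3 (h4.2.2 ▸ hD)

theorem Ctx.M (k : Ctx G 𝒜 N A a b c 𝒟 T E₁ E₂) (hodd : ∀ X ∈ 𝒜, Odd X.card)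
    {𝒥 : Finset (Finset V)} (hJ : 𝒥 ⊆ 𝒟) (hne : (𝒥.biUnion (xs 𝒜)).Nonempty)
    (hX : ∃ X ∈ 𝒜, X ∉ 𝒥.biUnion (xs 𝒜)) :
    ∑ D ∈ 𝒥, (xs 𝒜 D).card + 3 ≤ ∑ D ∈ 𝒥, (N ∩ D).card + (N ∩ T).card +
      (if E₁ ∈ 𝒥 then 1 else 0) := by
  obtain ⟨X, hX, hX2⟩ := hX
  obtain ⟨z, hz⟩ := k.h.nonemp X hX
  have key : ∀ X ∈ 𝒥.biUnion (xs 𝒜), X ∈ 𝒜 := by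
    intro X hX
    simp only [Finset.mem_biUnion, mem_xs] at hX
    obtain ⟨D, h1, h2, h3⟩ := hX
    exact h2
  have := k.h.HO' _ _ (k.ofJ hodd hJ
    (S := (𝒥.biUnion (fun D => N ∩ D)) ∪ (N ∩ T) ∪ (if E₁ ∈ 𝒥 then {b} else ∅))
    ?_ ?_ ?_ ?_) hne (fun D hD => k.h.sub (key D hD))
    ⟨z, k.h.sub hX hz, fun D hD h => hX2 (k.uniqA hX (key D hD) hz h ▸ hD)⟩
  · rw [k.sum_xs 𝒥 hJ] at this
    have h1 := Finset.card_union_le (𝒥.biUnion (fun D => N ∩ D) ∪ (N ∩ T))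
      (if E₁ ∈ 𝒥 then {b} else ∅)
    have h2 := Finset.card_union_le (𝒥.biUnion (fun D => N ∩ D)) (N ∩ T)
    have h3 : (𝒥.biUnion (fun D => N ∩ D)).card ≤ _ := Finset.card_biUnion_le
    have h4 : (if E₁ ∈ 𝒥 then {b} else ∅ : Finset V).card = if E₁ ∈ 𝒥 then 1 else 0 := by
      split_ifs <;> simp
    omega
  · intro D hD v hv
    simp only [Finset.mem_union, Finset.mem_biUnion]
    exact Or.inl (Or.inl ⟨D, hD, hv⟩)
  · intro v hv
    simp only [Finset.mem_union]
    exact Or.inl (Or.inr hv)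
  · intro h; simp [h]
  · intro v hv
    simp only [Finset.mem_union, Finset.mem_biUnion, Finset.mem_inter] at hv
    rcases hv with (⟨D, _, h⟩ | h) | h
    · exact h.1
    · exact h.1
    · split_ifs at h
      · simp at h; rw [h]; exact k.hb
      · simp at h

theorem Ctx.Ω (k : Ctx G 𝒜 N A a b c 𝒟 T E₁ E₂) (hodd : ∀ X ∈ 𝒜, Odd X.card) (hp : 2 ≤ 𝒜.card)
    {X} (hX : X ∈ M1 𝒜 T) :
    (𝒟.filter (fun D => Odd (X ∩ D).card)).card + 1 ≤ (X ∩ T).card := by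
  simp only [M1, Finset.mem_filter] at hX
  obtain ⟨hX, hmeet⟩ := hX
  rw [Finset.not_disjoint_iff] at hmeet
  obtain ⟨w, hwX, hwT⟩ := hmeet
  have hb := k.bA
  have hXN := Finset.disjoint_left.1 (k.h.dN X hX)
  set ℱ := 𝒟.filter (fun D => Odd (X ∩ D).card) with hℱ
  have hF : ∀ D ∈ ℱ, D ∈ 𝒟 ∧ Odd (X ∩ D).card := by
    intro D hD; simpa [hℱ] using hD
  set ℐ := ℱ.image (fun D => X ∩ D) with hℐ
  have hI : ∀ Y ∈ ℐ, ∃ D ∈ 𝒟, Y = X ∩ D ∧ Odd Y.card := by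
    intro Y hY
    simp only [hℐ, Finset.mem_image] at hY
    obtain ⟨D, hD, rfl⟩ := hY
    exact ⟨D, (hF D hD).1, rfl, (hF D hD).2⟩
  have cI : ℐ.card = ℱ.card := by
    apply Finset.card_image_of_injOn
    intro D hD E hE heq
    obtain ⟨x, hx⟩ := Finset.card_pos.1 (hF D hD).2.pos
    have hx2 : x ∈ X ∩ E := by
      have : X ∩ D = X ∩ E := heq
      rw [← this]; exact hx
    exact k.uniq (hF D hD).1 (hF E hE).1 (Finset.mem_inter.1 hx).2 (Finset.mem_inter.1 hx2).2
  have mI : ∀ Y ∈ (𝒜.erase X) ∪ ℐ, (Y ∈ 𝒜 ∧ Y ≠ X) ∨ (∃ D ∈ 𝒟, Y = X ∩ D ∧ Odd Y.card) := by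
    intro Y hY
    simp only [Finset.mem_union, Finset.mem_erase] at hY
    rcases hY with h | h
    · exact Or.inl ⟨h.2, h.1⟩
    · exact Or.inr (hI Y h)
  have dAI : Disjoint (𝒜.erase X) ℐ := by
    rw [Finset.disjoint_left]
    intro Y hY hY2
    obtain ⟨D, hD, he, ho⟩ := hI Y hY2
    obtain ⟨x, hx⟩ := Finset.card_pos.1 ho.pos
    rw [Finset.mem_erase] at hY
    exact hY.1 (k.uniqA hY.2 hX hx (by rw [he] at hx; exact (Finset.mem_inter.1 hx).1))
  have := k.h.HO' ((𝒜.erase X) ∪ ℐ) (N ∪ (X ∩ T)) ⟨?_, ?_, ?_, ?_⟩ ?_ ?_ ⟨w, k.h.sub hX hwX, ?_⟩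
  · rw [Finset.card_union_of_disjoint dAI, cI, Finset.card_erase_of_mem hX] at this
    have h1 := Finset.card_union_le N (X ∩ T)
    have h2 := k.h.cardN
    have hpar := hodd X hX
    rw [← k.sum_part X, Nat.odd_add, Finset.odd_sum_iff_odd_card_odd, ← hℱ] at hpar
    have h3 : ℱ.card ≤ (X ∩ T).card := by omega
    by_contra hcon
    have h4 : ℱ.card = (X ∩ T).card := by omega
    rw [h4] at hpar
    have := Nat.not_even_iff_odd (n := (X ∩ T).card)
    tauto
  · intro D hD E hE hne
    rcases mI D hD with hD1 | ⟨D', hD1, hD2, -⟩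
    · rcases mI E hE with hE1 | ⟨E', hE1, hE2, -⟩
      · exact k.h.disj D hD1.1 E hE1.1 hne
      · rw [hE2]; exact (k.h.disj D hD1.1 X hX hD1.2).mono_right Finset.inter_subset_left
    · rcases mI E hE with hE1 | ⟨E', hE1, hE2, -⟩
      · rw [hD2]; exact (k.h.disj X hX E hE1.1 hE1.2.symm).mono_left Finset.inter_subset_left
      · have : D' ≠ E' := by rintro rfl; exact hne (hD2.trans hE2.symm)
        rw [hD2, hE2]
        exact (k.t.disj D' hD1 E' hE1 this).mono Finset.inter_subset_right Finset.inter_subset_right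
  · intro D hD
    rcases mI D hD with hD1 | ⟨D', hD1, hD2, h⟩
    · exact hodd D hD1.1
    · exact h
  · intro D hD
    rw [Finset.disjoint_union_right]
    rcases mI D hD with hD1 | ⟨D', hD1, hD2, -⟩
    · exact ⟨k.h.dN D hD1.1, (k.h.disj D hD1.1 X hX hD1.2).mono_right Finset.inter_subset_left⟩
    · rw [hD2]
      exact ⟨(k.h.dN X hX).mono_left Finset.inter_subset_left,
        (k.t.dT D' hD1).mono Finset.inter_subset_right Finset.inter_subset_right⟩
  · intro D hD x hx y hxy
    rcases mI D hD with hD1 | ⟨D', hD1, hD2, -⟩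
    · rcases k.h.cl D hD1.1 x hx y hxy with h | h
      · exact Or.inl h
      · right; simp [h]
    · rw [hD2] at hx ⊢
      simp only [Finset.mem_inter, Finset.mem_union] at hx ⊢
      have h1 := k.h.cl X hX x hx.1 y hxy
      have h2 := k.clA hD1 hx.2 (k.h.sub hX hx.1) hxy
      have := k.hb
      rcases h2 with h2 | h2 | h2
      · tauto
      · tauto
      · rw [h2.2.1]; tauto
  · rw [← Finset.card_pos, Finset.card_union_of_disjoint dAI, Finset.card_erase_of_mem hX]; omega
  · intro D hD
    rcases mI D hD with hD1 | ⟨D', hD1, hD2, -⟩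
    · exact k.h.sub hD1.1
    · rw [hD2]; exact Finset.inter_subset_left.trans (k.h.sub hX)
  · intro D hD hw
    rcases mI D hD with hD1 | ⟨D', hD1, hD2, -⟩
    · exact hD1.2 (k.uniqA hD1.1 hX hw hwX)
    · rw [hD2] at hw
      exact Finset.disjoint_left.1 (k.t.dT D' hD1) (Finset.mem_inter.1 hw).2 hwT

theorem Ctx.sumΩ (k : Ctx G 𝒜 N A a b c 𝒟 T E₁ E₂) (hodd : ∀ X ∈ 𝒜, Odd X.card) (hp : 2 ≤ 𝒜.card)
    (ℳ) (hℳ : ℳ ⊆ M1 𝒜 T) :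
    (ℳ.biUnion (fun X => 𝒟.filter (fun D => Odd (X ∩ D).card))).card + ℳ.card ≤
      ∑ X ∈ ℳ, (X ∩ T).card := by
  calc _ ≤ ∑ X ∈ ℳ, (𝒟.filter (fun D => Odd (X ∩ D).card)).card + ℳ.card := by
        gcongr; exact Finset.card_biUnion_le
    _ = ∑ X ∈ ℳ, ((𝒟.filter (fun D => Odd (X ∩ D).card)).card + 1) := by
        rw [Finset.sum_add_distrib]; simp
    _ ≤ _ := Finset.sum_le_sum (fun X hX => k.Ω hodd hp (hℳ hX))

theorem Ctx.sumT (k : Ctx G 𝒜 N A a b c 𝒟 T E₁ E₂) :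
    ∑ X ∈ M1 𝒜 T, (X ∩ T).card ≤ (A ∩ T).card := by
  rw [← sum_inter k.h.hA k.h.disj T]
  exact Finset.sum_le_sum_of_subset (Finset.filter_subset _ _)

theorem Ctx.q (k : Ctx G 𝒜 N A a b c 𝒟 T E₁ E₂) (hodd : ∀ X ∈ 𝒜, Odd X.card) :
    (A ∩ T).card + (N ∩ T).card ≤
      (𝒟.filter (fun D => Odd ((A ∩ D).card + (N ∩ D).card))).card := by
  have hpart : ∀ D, (D \ (A ∪ N)).card + ((A ∩ D).card + (N ∩ D).card) = D.card := by
    intro D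
    rw [← Finset.card_union_of_disjoint, ← Finset.union_inter_distrib_right,
      Finset.inter_comm]
    · exact Finset.card_sdiff_add_card_inter _ _
    · exact k.h.AN.mono Finset.inter_subset_left Finset.inter_subset_left
  set ℱ := 𝒟.filter (fun D => ¬ Odd ((A ∩ D).card + (N ∩ D).card)) with hℱ
  have hF : ∀ D ∈ ℱ, D ∈ 𝒟 ∧ Odd (D \ (A ∪ N)).card := by
    intro D hD
    simp only [hℱ, Finset.mem_filter] at hD
    refine ⟨hD.1, ?_⟩
    have h1 := k.t.odd D hD.1
    rw [← hpart D] at h1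
    by_contra hcon
    rw [Nat.odd_add] at h1
    have h2 := Nat.not_even_iff_odd (n := (A ∩ D).card + (N ∩ D).card)
    tauto
  set ℐ := ℱ.image (fun D => D \ (A ∪ N)) with hℐ
  have hI : ∀ Y ∈ ℐ, ∃ D ∈ 𝒟, Y = D \ (A ∪ N) ∧ Odd Y.card := by
    intro Y hY
    simp only [hℐ, Finset.mem_image] at hY
    obtain ⟨D, hD, rfl⟩ := hY
    exact ⟨D, (hF D hD).1, rfl, (hF D hD).2⟩
  have cI : ℐ.card = ℱ.card := by
    apply Finset.card_image_of_injOn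
    intro D hD E hE heq
    obtain ⟨x, hx⟩ := Finset.card_pos.1 (hF D hD).2.pos
    have hx2 : x ∈ E \ (A ∪ N) := by
      have : D \ (A ∪ N) = E \ (A ∪ N) := heq
      rw [← this]; exact hx
    exact k.uniq (hF D hD).1 (hF E hE).1 (Finset.mem_sdiff.1 hx).1 (Finset.mem_sdiff.1 hx2).1
  have mI : ∀ Y ∈ 𝒜 ∪ ℐ, (Y ∈ 𝒜) ∨ (∃ D ∈ 𝒟, Y = D \ (A ∪ N) ∧ Odd Y.card) := by
    intro Y hY
    simp only [Finset.mem_union] at hY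
    rcases hY with h | h
    · exact Or.inl h
    · exact Or.inr (hI Y h)
  have dX : ∀ X ∈ 𝒜, ∀ D, Disjoint X (D \ (A ∪ N)) := by
    intro X hX D
    rw [Finset.disjoint_left]; intro v hv
    simp [k.h.sub hX hv]
  have dAI : Disjoint 𝒜 ℐ := by
    rw [Finset.disjoint_left]
    intro Y hY hY2
    obtain ⟨D, hD, he, ho⟩ := hI Y hY2
    obtain ⟨x, hx⟩ := Finset.card_pos.1 ho.pos
    exact Finset.disjoint_left.1 (dX Y hY D) hx (he ▸ hx)
  have hAN := Finset.disjoint_left.1 k.h.AN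
  have := k.hB.B (𝒜 ∪ ℐ) ((T \ A) ∪ N) ⟨?_, ?_, ?_, ?_⟩ ?_
  · rw [Finset.card_union_of_disjoint dAI, cI] at this
    have h1 := Finset.card_union_add_card_inter (T \ A) N
    have h2 : (T \ A) ∩ N = N ∩ T := by
      ext v; have := @hAN v
      simp only [Finset.mem_inter, Finset.mem_sdiff]; tauto
    rw [h2] at h1
    have h3 := k.T_split
    have h4 := k.h.cardN
    have h5 := k.t.card
    have h6 := Finset.card_filter_add_card_filter_not (s := 𝒟)
      (fun D => Odd ((A ∩ D).card + (N ∩ D).card))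
    rw [← hℱ] at h6
    omega
  · intro D hD E hE hne
    rcases mI D hD with hD1 | ⟨D', hD1, hD2, -⟩
    · rcases mI E hE with hE1 | ⟨E', hE1, hE2, -⟩
      · exact k.h.disj D hD1 E hE1 hne
      · rw [hE2]; exact dX D hD1 E'
    · rcases mI E hE with hE1 | ⟨E', hE1, hE2, -⟩
      · rw [hD2]; exact (dX E hE1 D').symm
      · have : D' ≠ E' := by rintro rfl; exact hne (hD2.trans hE2.symm)
        rw [hD2, hE2]
        exact (k.t.disj D' hD1 E' hE1 this).mono Finset.sdiff_subset Finset.sdiff_subset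
  · intro D hD
    rcases mI D hD with hD1 | ⟨D', hD1, hD2, h⟩
    · exact hodd D hD1
    · exact h
  · intro D hD
    rw [Finset.disjoint_union_right]
    rcases mI D hD with hD1 | ⟨D', hD1, hD2, -⟩
    · refine ⟨?_, k.h.dN D hD1⟩
      rw [Finset.disjoint_left]; intro v hv; simp [k.h.sub hD1 hv]
    · rw [hD2]
      refine ⟨(k.t.dT D' hD1).mono Finset.sdiff_subset Finset.sdiff_subset, ?_⟩
      rw [Finset.disjoint_left]; intro v hv; simp only [Finset.mem_sdiff, Finset.mem_union] at hv
      tauto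
  · intro D hD x hx y hxy
    rcases mI D hD with hD1 | ⟨D', hD1, hD2, -⟩
    · rcases k.h.cl D hD1 x hx y hxy with h | h
      · exact Or.inl h
      · right; simp [h]
    · rw [hD2] at hx ⊢
      simp only [Finset.mem_sdiff, Finset.mem_union, not_or] at hx ⊢
      have := k.clZ hD1 hx.1 hx.2.1 hx.2.2 hxy
      tauto
  · have h4 := k.h.cardN
    have := Finset.card_le_card (Finset.subset_union_right : N ⊆ (T \ A) ∪ N)
    omega

theorem Ctx.w (k : Ctx G 𝒜 N A a b c 𝒟 T E₁ E₂) (hodd : ∀ X ∈ 𝒜, Odd X.card) (hp : 2 ≤ 𝒜.card) :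
    (M1 𝒜 T).card + (N ∩ T).card ≤
      (𝒟.filter (fun D => Odd ((N ∩ D).card + (xs 𝒜 D).card))).card := by
  have h1 := k.q hodd
  have h2 := k.sumΩ hodd hp _ subset_rfl
  have h3 := k.sumT
  have h4 : (𝒟.filter (fun D => Odd ((A ∩ D).card + (N ∩ D).card))) ⊆
      (𝒟.filter (fun D => Odd ((N ∩ D).card + (xs 𝒜 D).card))) ∪
      ((M1 𝒜 T).biUnion (fun X => 𝒟.filter (fun D => Odd (X ∩ D).card))) := by
    intro D hD
    simp only [Finset.mem_filter] at hD
    simp only [Finset.mem_union, Finset.mem_filter, Finset.mem_biUnion]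
    by_contra hcon
    push Not at hcon
    obtain ⟨hc1, hc2⟩ := hcon
    have hc1 := hc1 hD.1
    have e1 : (A ∩ D).card = ∑ X ∈ 𝒜, (X ∩ D).card := (sum_inter k.h.hA k.h.disj D).symm
    have e2 : ∑ X ∈ 𝒜, (X ∩ D).card ≡ ∑ X ∈ 𝒜, (if X ⊆ D then 1 else 0) [MOD 2] := by
      have : ∀ X ∈ 𝒜, (X ∩ D).card % 2 = (if X ⊆ D then 1 else 0) % 2 := by
        intro X hX
        by_cases hXD : X ⊆ D
        · rw [Finset.inter_eq_left.2 hXD, if_pos hXD, Nat.odd_iff.1 (hodd X hX)]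
        · rw [if_neg hXD]
          by_cases hXT : Disjoint X T
          · obtain ⟨D', hD', h⟩ := k.inD hX hXT
            have : X ∩ D = ∅ := by
              rw [← Finset.disjoint_iff_inter_eq_empty]
              refine (k.t.disj D' hD' D hD.1 ?_).mono_left h
              rintro rfl; exact hXD h
            rw [this]; rfl
          · have := hc2 X (by simp [M1, hX, hXT]) hD.1
            rw [Nat.not_odd_iff_even, Nat.even_iff] at this
            rw [this]
      rw [Nat.ModEq, Finset.sum_nat_mod, Finset.sum_congr rfl this, ← Finset.sum_nat_mod]
    have e3 : ∑ X ∈ 𝒜, (if X ⊆ D then 1 else 0) = (xs 𝒜 D).card := by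
      rw [xs, Finset.card_filter]
    rw [e3, ← e1] at e2
    have hD2 := hD.2
    rw [Nat.odd_iff] at hD2 hc1
    unfold Nat.ModEq at e2
    omega
  have h5 := (Finset.card_le_card h4).trans (Finset.card_union_le _ _)
  omega

end core


section core
variable {V : Type*} [DecidableEq V]
variable {G : SimpleGraph V} {𝒜 : Finset (Finset V)} {N A : Finset V} {a b c : V}
    {𝒟 : Finset (Finset V)} {T E₁ E₂ : Finset V}

/-- integer bookkeeping -/
theorem Ctx.book (k : Ctx G 𝒜 N A a b c 𝒟 T E₁ E₂) (hodd : ∀ X ∈ 𝒜, Odd X.card) (hp : 2 ≤ 𝒜.card)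
    (𝒥 : Finset (Finset V)) (hJ : 𝒥 ⊆ 𝒟) (hin : ∀ D ∈ 𝒥, (N ∩ D).card ≤ (xs 𝒜 D).card)
    (hout : ∀ D ∈ 𝒟, D ∉ 𝒥 → (xs 𝒜 D).card ≤ (N ∩ D).card) :
    (N ∩ T).card + ∑ D ∈ 𝒥, (N ∩ D).card ≤ 1 + ∑ D ∈ 𝒥, (xs 𝒜 D).card := by
  have cN := k.h.cardN
  have sN := k.sum_part N
  have sx := k.sum_xs_ge
  have hw := k.w hodd hp
  have e1 := Finset.sum_sdiff (f := fun D => (N ∩ D).card) hJ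
  have e2 := Finset.sum_sdiff (f := fun D => (xs 𝒜 D).card) hJ
  have e3 : (𝒟.filter (fun D => Odd ((N ∩ D).card + (xs 𝒜 D).card))).card =
    ∑ D ∈ 𝒟, (if Odd ((N ∩ D).card + (xs 𝒜 D).card) then 1 else 0) := Finset.card_filter _ _
  have e4 := Finset.sum_sdiff
    (f := fun D => (if Odd ((N ∩ D).card + (xs 𝒜 D).card) then 1 else 0 : ℕ)) hJ
  have e5 : ∑ D ∈ 𝒟 \ 𝒥, (if Odd ((N ∩ D).card + (xs 𝒜 D).card) then 1 else 0 : ℕ) +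
      ∑ D ∈ 𝒟 \ 𝒥, (xs 𝒜 D).card ≤ ∑ D ∈ 𝒟 \ 𝒥, (N ∩ D).card := by
    rw [← Finset.sum_add_distrib]
    apply Finset.sum_le_sum
    intro D hD
    rw [Finset.mem_sdiff] at hD
    have := hout D hD.1 hD.2
    split_ifs with ho
    · rw [Nat.odd_iff] at ho; omega
    · omega
  have e6 : ∑ D ∈ 𝒥, (if Odd ((N ∩ D).card + (xs 𝒜 D).card) then 1 else 0 : ℕ) +
      ∑ D ∈ 𝒥, (N ∩ D).card ≤ ∑ D ∈ 𝒥, (xs 𝒜 D).card := by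
    rw [← Finset.sum_add_distrib]
    apply Finset.sum_le_sum
    intro D hD
    have := hin D hD
    split_ifs with ho
    · rw [Nat.odd_iff] at ho; omega
    · omega
  omega

theorem Ctx.noJ (k : Ctx G 𝒜 N A a b c 𝒟 T E₁ E₂) (hodd : ∀ X ∈ 𝒜, Odd X.card) (hp : 2 ≤ 𝒜.card) :
    ∀ D ∈ 𝒟, (xs 𝒜 D).card = 0 ∨ (xs 𝒜 D).card < (N ∩ D).card := by
  by_contra hcon
  push Not at hcon
  obtain ⟨D₀, hD₀, hx0, hn0⟩ := hcon
  set 𝒥 := 𝒟.filter (fun D => (xs 𝒜 D).card ≠ 0 ∧ (N ∩ D).card ≤ (xs 𝒜 D).card) with h𝒥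
  have hJ : 𝒥 ⊆ 𝒟 := Finset.filter_subset _ _
  have hD₀J : D₀ ∈ 𝒥 := by simp only [h𝒥, Finset.mem_filter]; exact ⟨hD₀, hx0, hn0⟩
  have hne : (𝒥.biUnion (xs 𝒜)).Nonempty := by
    obtain ⟨X, hX⟩ := Finset.card_pos.1 (Nat.pos_of_ne_zero hx0)
    exact ⟨X, Finset.mem_biUnion.2 ⟨D₀, hD₀J, hX⟩⟩
  have hbook := k.book hodd hp 𝒥 hJ
    (fun D hD => by simp only [h𝒥, Finset.mem_filter] at hD; exact hD.2.2)
    (fun D hD hn => by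
      simp only [h𝒥, Finset.mem_filter] at hn
      by_contra h
      exact hn ⟨hD, by omega, by omega⟩)
  by_cases hX : ∃ X ∈ 𝒜, X ∉ 𝒥.biUnion (xs 𝒜)
  · have := k.M hodd hJ hne hX
    split_ifs at this <;> omega
  · push Not at hX
    have heq : 𝒥.biUnion (xs 𝒜) = 𝒜 := by
      apply Finset.Subset.antisymm
      · intro X hX
        simp only [Finset.mem_biUnion, mem_xs] at hX
        obtain ⟨_, _, h, _⟩ := hX
        exact h
      · exact hX
    obtain ⟨X, hXA, hcX⟩ := (k.h.hA c).1 k.hc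
    have hE2 : E₂ ∈ 𝒥 := by
      have := hX X hXA
      simp only [Finset.mem_biUnion, mem_xs] at this
      obtain ⟨D, hD, _, hXD⟩ := this
      have := k.c_in (hJ hD) (hXD hcX)
      exact this ▸ hD
    set S := (𝒥.biUnion (fun D => N ∩ D)) ∪ (N ∩ T) with hS
    have hSN : S ⊆ N := by
      intro v hv
      simp only [hS, Finset.mem_union, Finset.mem_biUnion, Finset.mem_inter] at hv
      rcases hv with ⟨_, _, h⟩ | h
      · exact h.1
      · exact h.1
    have hof := k.ofJ hodd hJ (S := S)
      (fun D hD v hv => by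
        simp only [hS, Finset.mem_union, Finset.mem_biUnion]; exact Or.inl ⟨D, hD, hv⟩)
      Finset.subset_union_right
      (fun _ => by
        simp only [hS, Finset.mem_union, Finset.mem_biUnion]
        exact Or.inl ⟨E₂, hE2, by simp [k.hb, k.t.hb]⟩)
      hSN
    have hcx := k.sum_xs 𝒥 hJ
    rw [heq] at hof hcx
    obtain ⟨Y, hY, hYX⟩ := Finset.exists_mem_ne (by omega : 1 < 𝒜.card) X
    obtain ⟨z, hz⟩ := k.h.nonemp Y hY
    have h3 := k.hB.C X S ⟨c, hcX⟩ (hof.dS X hXA) (hof.cl X hXA)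
      ⟨z, fun h => hYX (k.uniqA hY hXA hz h), fun h => Finset.disjoint_left.1 (k.h.dN Y hY) hz (hSN h)⟩
    have h4 := k.hB.B _ _ hof (by omega)
    have h5 := Finset.card_union_le (𝒥.biUnion (fun D => N ∩ D)) (N ∩ T)
    have h6 : (𝒥.biUnion (fun D => N ∩ D)).card ≤ _ := Finset.card_biUnion_le
    rw [← hS] at h5
    omega

theorem Ctx.M_single (k : Ctx G 𝒜 N A a b c 𝒟 T E₁ E₂) (hodd : ∀ X ∈ 𝒜, Odd X.card)
    {D} (hD : D ∈ 𝒟) (hne : (xs 𝒜 D).card ≠ 0) (hX : ∃ X ∈ 𝒜, ¬ X ⊆ D) :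
    (xs 𝒜 D).card + 3 ≤ (N ∩ D).card + (N ∩ T).card + (if D = E₁ then 1 else 0) := by
  have := k.M hodd (𝒥 := {D}) (by simpa using hD)
    (by simp only [Finset.singleton_biUnion]; exact Finset.card_pos.1 (by omega))
    (by
      obtain ⟨X, h1, h2⟩ := hX
      exact ⟨X, h1, by simp [mem_xs, h2]⟩)
  simp only [Finset.sum_singleton, Finset.mem_singleton] at this
  simpa [eq_comm] using this

theorem Ctx.case_two (k : Ctx G 𝒜 N A a b c 𝒟 T E₁ E₂) (hodd : ∀ X ∈ 𝒜, Odd X.card)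
    (hp : 2 ≤ 𝒜.card) : False := by
  have hno := k.noJ hodd hp
  obtain ⟨X₁, hX₁, haX⟩ := (k.h.hA a).1 k.ha
  have hD0 : ∀ D ∈ D0 𝒜 N 𝒟, D ∈ 𝒟 := fun D hD => (Finset.mem_filter.1 hD).1
  have D1sub : ∀ ℳ ⊆ M1 𝒜 T, ∀ 𝒦 ⊆ D1 𝒜 N A 𝒟, (∀ D ∈ 𝒦, ∃ X ∈ ℳ, D ⊆ X) →
      𝒦.card + ℳ.card ≤ ∑ X ∈ ℳ, (X ∩ T).card := by
    intro ℳ hℳ 𝒦 h𝒦 h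
    refine le_trans ?_ (k.sumΩ hodd hp ℳ hℳ)
    gcongr
    intro D hD
    obtain ⟨X, hX, hDX⟩ := h D hD
    have hD' := (k.D1_sub (h𝒦 hD)).1
    simp only [Finset.mem_biUnion, Finset.mem_filter]
    refine ⟨X, hX, hD', ?_⟩
    rw [Finset.inter_eq_right.2 hDX]
    exact k.t.odd D hD'
  have K4 : (D1 𝒜 N A 𝒟).card + (M1 𝒜 T).card ≤ (A ∩ T).card :=
    (D1sub _ subset_rfl _ subset_rfl (fun D hD => (k.D1_sub hD).2)).trans k.sumT
  refine k.conclude ?_ ?_ ?_ K4 ?_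
  · intro D hD
    rcases hno D (hD0 D hD) with h | h
    · simp only [D0, Finset.mem_filter] at hD
      rw [Finset.card_eq_zero] at h
      rw [h] at hD ⊢
      have : (N ∩ D).Nonempty := by simpa using hD.2
      have := this.card_pos
      rw [Finset.card_empty]; omega
    · omega
  · intro D hD hDE hx
    have := k.M_single hodd (hD0 D hD) hx
      ⟨X₁, hX₁, fun h => hDE (k.uniq (hD0 D hD) k.t.h1 (h haX) k.t.ha)⟩
    rw [if_neg hDE] at this
    omega
  · have := k.book hodd hp ∅ (by simp) (by simp) (fun D hD _ => by
      rcases hno D hD with h | h <;> omega)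
    simpa using this
  · intro hν
    have hν' : ∀ v, v ∈ N → v ∉ T := by
      rw [Finset.card_eq_zero] at hν
      intro v h1 h2
      have : v ∈ N ∩ T := by simp [h1, h2]
      simp [hν] at this
    obtain ⟨Y, hY, hcY⟩ := (k.h.hA c).1 k.hc
    have memD0 : (xs 𝒜 E₁).card ≠ 0 → E₁ ∈ D0 𝒜 N 𝒟 := by
      intro h
      simp only [D0, Finset.mem_filter]
      exact ⟨k.t.h1, Or.inr (Finset.card_pos.1 (by omega))⟩
    have viaM : (xs 𝒜 E₁).card ≠ 0 →
        (E₁ ∈ D0 𝒜 N 𝒟 ∧ (xs 𝒜 E₁).card + 2 ≤ (N ∩ E₁).card) := by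
      intro h
      refine ⟨memD0 h, ?_⟩
      have := k.M_single hodd k.t.h1 h ⟨Y, hY, fun hs => k.t.ne (k.c_in k.t.h1 (hs hcY))⟩
      rw [if_pos rfl] at this
      omega
    by_cases hd : Disjoint X₁ T
    · left
      apply viaM
      obtain ⟨D, hD, h⟩ := k.inD hX₁ hd
      have := k.uniq hD k.t.h1 (h haX) k.t.ha
      subst this
      exact (Finset.card_pos.2 ⟨X₁, mem_xs.2 ⟨hX₁, h⟩⟩).ne'
    · have hXM : X₁ ∈ M1 𝒜 T := by simp [M1, hX₁, hd]
      obtain ⟨w, hwX, hwT⟩ := Finset.not_disjoint_iff.1 hd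
      set 𝒟X := (D1 𝒜 N A 𝒟).filter (fun D => D ⊆ X₁) with h𝒟X
      have τ1 : 1 ≤ (X₁ ∩ T).card := Finset.card_pos.2 ⟨w, by simp [hwX, hwT]⟩
      have fin : 𝒟X.card + 2 ≤ (X₁ ∩ T).card →
          (D1 𝒜 N A 𝒟).card + (M1 𝒜 T).card + 1 ≤ (A ∩ T).card := by
        intro h
        have h1 := D1sub ((M1 𝒜 T).erase X₁) (Finset.erase_subset _ _)
          ((D1 𝒜 N A 𝒟).filter (fun D => ¬ D ⊆ X₁)) (Finset.filter_subset _ _) (by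
            intro D hD
            rw [Finset.mem_filter] at hD
            obtain ⟨X, hX, hDX⟩ := (k.D1_sub hD.1).2
            refine ⟨X, ?_, hDX⟩
            rw [Finset.mem_erase]
            refine ⟨?_, hX⟩
            rintro rfl; exact hD.2 hDX)
        have h2 := Finset.add_sum_erase (M1 𝒜 T) (fun X => (X ∩ T).card) hXM
        have h3 := Finset.card_filter_add_card_filter_not (s := D1 𝒜 N A 𝒟) (fun D => D ⊆ X₁)
        have h4 := k.sumT
        have h5 := Finset.card_erase_add_one hXM
        rw [← h𝒟X] at h3
        omega
      by_cases hne : 𝒟X.Nonempty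
      · right
        apply fin
        have hsub : ∀ D ∈ 𝒟X, D ∈ 𝒟 ∧ D ⊆ X₁ := by
          intro D hD
          rw [h𝒟X, Finset.mem_filter] at hD
          exact ⟨(k.D1_sub hD.1).1, hD.2⟩
        have := k.h.HO' 𝒟X ((X₁ ∩ T) ∪ {b}) ⟨?_, ?_, ?_, ?_⟩ hne
          (fun D hD => (hsub D hD).2.trans (k.h.sub hX₁)) ⟨w, k.h.sub hX₁ hwX, fun D hD h =>
            Finset.disjoint_left.1 (k.t.dT D (hsub D hD).1) h hwT⟩
        · have h5 := Finset.card_union_le (X₁ ∩ T) {b}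
          rw [Finset.card_singleton] at h5
          omega
        · intro D hD E hE; exact k.t.disj D (hsub D hD).1 E (hsub E hE).1
        · intro D hD; exact k.t.odd D (hsub D hD).1
        · intro D hD
          rw [Finset.disjoint_union_right]
          refine ⟨(k.t.dT D (hsub D hD).1).mono_right Finset.inter_subset_right, ?_⟩
          simp only [Finset.disjoint_singleton_right]
          exact fun h => k.bA (k.h.sub hX₁ ((hsub D hD).2 h))
        · intro D hD x hx y hxy
          simp only [Finset.mem_union, Finset.mem_inter, Finset.mem_singleton]
          have h1 := k.clA (hsub D hD).1 hx (k.h.sub hX₁ ((hsub D hD).2 hx)) hxy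
          have h2 := k.h.cl X₁ hX₁ x ((hsub D hD).2 hx) y hxy
          have := hν' y
          tauto
      · rw [Finset.not_nonempty_iff_eq_empty] at hne
        by_cases hτ : 2 ≤ (X₁ ∩ T).card
        · right
          apply fin
          rw [hne, Finset.card_empty]; omega
        · left
          by_cases hx : (xs 𝒜 E₁).card = 0
          · have h1 := k.HE1 hX₁ haX (by omega) hν
            refine ⟨?_, by omega⟩
            rcases k.E1_mem with h2 | h2
            · exact h2
            · exfalso
              obtain ⟨X, hX, hs⟩ := (k.D1_sub h2).2
              have : X = X₁ := k.uniqA (Finset.mem_filter.1 hX).1 hX₁ (hs k.t.ha) haX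
              subst this
              have : E₁ ∈ 𝒟X := by rw [h𝒟X, Finset.mem_filter]; exact ⟨h2, hs⟩
              rw [hne] at this
              simp at this
          · exact viaM hx

theorem Ctx.absurd (k : Ctx G 𝒜 N A a b c 𝒟 T E₁ E₂) : False := by
  by_cases h1 : 𝒜.card = 1
  · exact k.case_one h1
  · have := k.h.ne.card_pos
    refine k.case_two (k.h.par.resolve_right h1) (by omega)

theorem main_lemma (hB : Base G) (h : MinFrag G 𝒜 N A) (ha : a ∈ A) (hb : b ∈ N)
    (hab : G.Adj a b) (hc : c ∈ A) (hcb : G.Adj c b) : c = a := by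
  by_contra hca
  rcases hB.bad a b hab with ⟨P, Q, T, t⟩ | ⟨𝒟, T, D₁, D₂, t⟩
  · exact typeII_false hB h ha hb hc hca hcb t
  · exact Ctx.absurd ⟨hB, h, ha, hb, hc, hca, hcb, t⟩

end core


section core
variable {V : Type*} [DecidableEq V]
variable {G : SimpleGraph V} {𝒜 : Finset (Finset V)} {N A : Finset V}

open Classical in
theorem minFrag_false (hB : Base G) (h : MinFrag G 𝒜 N A) : False := by
  have hu : ∀ x ∈ A, ∀ y ∈ A, ∀ b ∈ N, G.Adj x b → G.Adj y b → y = x :=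
    fun x hx y hy b hb h1 h2 => main_lemma hB h hx hb h1 hy h2
  have cN := h.cardN
  have hne := h.ne.card_pos
  by_cases hp : 𝒜.card = 1
  · obtain ⟨X, hX⟩ := Finset.card_eq_one.1 hp
    have hXA : X = A := by ext v; rw [h.hA]; simp [hX]
    subst hXA
    have hXm : X ∈ 𝒜 := by simp [hX]
    obtain ⟨z, hz⟩ := Finset.card_pos.1 (by omega : 0 < N.card)
    have hXN := Finset.disjoint_left.1 h.AN
    have hzX : z ∉ X := fun h' => hXN h' hz
    set NN : V → Finset V := fun x => N.filter (fun b => G.Adj x b) with hNN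
    have hsum : ∑ x ∈ X, (NN x).card ≤ 3 := by
      rw [← Finset.card_biUnion]
      · have : X.biUnion NN ⊆ N := by
          intro v hv
          simp only [Finset.mem_biUnion, hNN, Finset.mem_filter] at hv
          obtain ⟨_, _, h, _⟩ := hv; exact h
        have := Finset.card_le_card this
        omega
      · intro x hx y hy hxy
        simp only [Function.onFun]
        rw [Finset.disjoint_left]
        intro b hb1 hb2
        simp only [hNN, Finset.mem_filter] at hb1 hb2
        exact hxy (hu y hy x hx b hb1.1 hb2.2 hb1.2)
    set W := X.filter (fun x => (NN x).Nonempty) with hW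
    have hW3 : W.card ≤ 3 := by
      refine le_trans ?_ hsum
      rw [hW, Finset.card_filter]
      apply Finset.sum_le_sum
      intro x hx
      split_ifs with h'
      · exact h'.card_pos
      · omega
    have hclW : Cl G (X \ W) W := by
      intro x hx y hxy
      simp only [Finset.mem_sdiff] at hx ⊢
      rcases h.cl X hXm x hx.1 y hxy with h1 | h1
      · tauto
      · exfalso
        apply hx.2
        simp only [hW, hNN, Finset.mem_filter]
        exact ⟨hx.1, y, by simp [h1, hxy]⟩
    have hWX : W ⊆ X := Finset.filter_subset _ _
    by_cases hd : (X \ W).Nonempty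
    · have h3 := hB.C (X \ W) W hd Finset.sdiff_disjoint hclW
        ⟨z, by simp [hzX], fun h' => hzX (hWX h')⟩
      have h4 := h.HE (X \ W) W hd Finset.sdiff_disjoint hclW
        ⟨z, by simp [hzX], fun h' => hzX (hWX h')⟩ (by
          rw [Finset.card_sdiff_of_subset hWX]
          have := Finset.card_le_card hWX
          omega)
      omega
    · have hXW : X ⊆ W := by
        rwa [Finset.not_nonempty_iff_eq_empty, Finset.sdiff_eq_empty_iff_subset] at hd
      have hX3 : X.card ≤ 3 := (Finset.card_le_card hXW).trans hW3
      have hdeg : ∀ x ∈ X, 5 - X.card ≤ (NN x).card := by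
        intro x hx
        have h1 := hB.deg x (X.erase x ∪ NN x) (by
          intro y hy
          simp only [Finset.mem_union, Finset.mem_erase, hNN, Finset.mem_filter]
          rcases h.cl X hXm x hx y hy with h1 | h1
          · exact Or.inl ⟨hy.ne', h1⟩
          · exact Or.inr ⟨h1, hy⟩)
        have h2 := Finset.card_union_le (X.erase x) (NN x)
        have h3 := Finset.card_erase_add_one hx
        omega
      have h5 := Finset.card_nsmul_le_sum X _ _ hdeg
      have h6 := (h.nonemp X hXm).card_pos
      rw [smul_eq_mul] at h5
      generalize X.card = q at *
      interval_cases q <;> omega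
  · have hodd := h.par.resolve_right hp
    set NN : Finset V → Finset V := fun X => N.filter (fun b => ∃ x ∈ X, G.Adj x b) with hNN
    have hsum : ∑ X ∈ 𝒜, (NN X).card ≤ N.card := by
      rw [← Finset.card_biUnion]
      · apply Finset.card_le_card
        intro v hv
        simp only [Finset.mem_biUnion, hNN, Finset.mem_filter] at hv
        obtain ⟨_, _, h, _⟩ := hv; exact h
      · intro X hX Y hY hXY
        simp only [Function.onFun]
        rw [Finset.disjoint_left]
        intro b hb1 hb2
        simp only [hNN, Finset.mem_filter] at hb1 hb2
        obtain ⟨hb, x, hx, hxb⟩ := hb1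
        obtain ⟨_, y, hy, hyb⟩ := hb2
        have := hu x (h.sub hX hx) y (h.sub hY hy) b hb hxb hyb
        subst this
        exact Finset.disjoint_left.1 (h.disj X hX Y hY hXY) hx hy
    have h4 : ∀ X ∈ 𝒜, 4 ≤ (NN X).card := by
      intro X hX
      obtain ⟨Y, hY, hYX⟩ := Finset.exists_mem_ne (by omega : 1 < 𝒜.card) X
      obtain ⟨z, hz⟩ := h.nonemp Y hY
      have := h.HO' {X} (NN X) ⟨?_, ?_, ?_, ?_⟩ (by simp) (by simpa using h.sub hX)
        ⟨z, h.sub hY hz, by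
          simpa using fun hzX => Finset.disjoint_left.1 (h.disj Y hY X hX hYX) hz hzX⟩
      · simpa using this
      · intro D hD E hE hne
        simp at hD hE; rw [hD, hE] at hne; exact absurd rfl hne
      · simpa using hodd X hX
      · simpa using (h.dN X hX).mono_right (Finset.filter_subset _ _)
      · intro D hD x hx y hxy
        simp at hD
        subst hD
        rcases h.cl D hX x hx y hxy with h1 | h1
        · exact Or.inl h1
        · right
          simp only [hNN, Finset.mem_filter]
          exact ⟨h1, x, hx, hxy⟩
    have h5 := Finset.card_nsmul_le_sum 𝒜 _ _ h4
    rw [smul_eq_mul] at h5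
    omega

structure Frag (G : SimpleGraph V) (𝒜 : Finset (Finset V)) (N A : Finset V) : Prop where
  hA : ∀ v, v ∈ A ↔ ∃ X ∈ 𝒜, v ∈ X
  ne : 𝒜.Nonempty
  disj : ∀ D ∈ 𝒜, ∀ E ∈ 𝒜, D ≠ E → Disjoint D E
  nonemp : ∀ X ∈ 𝒜, X.Nonempty
  dN : ∀ X ∈ 𝒜, Disjoint X N
  cl : ∀ X ∈ 𝒜, Cl G X N
  two : 2 ≤ N.card
  cardN : N.card ≤ 𝒜.card + 2
  par : (∀ X ∈ 𝒜, Odd X.card) ∨ (𝒜.card = 1 ∧ ∃ z, z ∉ A ∧ z ∉ N)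

theorem exists_frag (hB : Base G) {a b : V} (hab : G.Adj a b) : ∃ 𝒜 N A, Frag G 𝒜 N A := by
  rcases hB.bad a b hab with ⟨P, Q, T, t⟩ | ⟨𝒟, T, D₁, D₂, t⟩
  · have hcT := t.cT
    have degQ : ∃ z ∈ Q, z ≠ b := by
      by_contra hcon
      push Not at hcon
      have := hB.deg b (T ∪ {a}) (by
        intro y hy
        rcases t.cov y with h1 | h1 | h1
        · simp [(t.only y h1 b t.hb hy.symm).1]
        · exact absurd (hcon y h1).symm hy.ne
        · simp [h1])
      have := Finset.card_union_le T {a}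
      rw [Finset.card_singleton] at this; omega
    obtain ⟨z, hzQ, hzb⟩ := degQ
    have hzP : z ∉ P := fun h => Finset.disjoint_left.1 t.dPQ h hzQ
    have hzT : z ∉ T ∪ {b} := by
      have := Finset.disjoint_left.1 t.dQT hzQ
      simp [this, hzb]
    have hcl : Cl G P (T ∪ {b}) := by
      intro x hx y hy
      rcases t.cov y with h1 | h1 | h1
      · simp [h1]
      · simp [(t.only x hx y h1 hy).2]
      · simp [h1]
    have hdis : Disjoint P (T ∪ {b}) := by
      rw [Finset.disjoint_union_right]
      refine ⟨t.dPT, ?_⟩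
      simpa using fun h => Finset.disjoint_left.1 t.dPQ h t.hb
    have h3 := hB.C P (T ∪ {b}) ⟨a, t.ha⟩ hdis hcl ⟨z, hzP, hzT⟩
    have h4 := Finset.card_union_le T {b}
    rw [Finset.card_singleton] at h4
    refine ⟨{P}, T ∪ {b}, P, ?_, by simp, ?_, ?_, ?_, ?_, by omega, ?_, Or.inr ⟨by simp, z, hzP, hzT⟩⟩
    · intro v; simp
    · intro D hD E hE hne
      simp at hD hE; rw [hD, hE] at hne; exact absurd rfl hne
    · simpa using ⟨a, t.ha⟩
    · simpa using hdis
    · intro X hX; simp at hX; rw [hX]; exact hcl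
    · rw [Finset.card_singleton]; omega
  · have hsub : ∀ D ∈ 𝒟.erase D₁, D ∈ 𝒟 ∧ a ∉ D := by
      intro D hD
      rw [Finset.mem_erase] at hD
      exact ⟨hD.2, fun h => Finset.disjoint_left.1 (t.disj D hD.2 D₁ t.h1 hD.1) h t.ha⟩
    have h4 := Finset.card_union_le T {a}
    rw [Finset.card_singleton] at h4
    have h5 := t.card
    have h6 := Finset.card_erase_add_one t.h1
    have h7 : 1 < 𝒟.card := Finset.one_lt_card.2 ⟨D₁, t.h1, D₂, t.h2, t.ne⟩
    have h8 := Finset.card_le_card (Finset.subset_union_left : T ⊆ T ∪ {a})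
    refine ⟨𝒟.erase D₁, T ∪ {a}, (𝒟.erase D₁).biUnion id, ?_, ⟨D₂, by simp [t.h2, t.ne.symm]⟩,
      ?_, ?_, ?_, ?_, ?_, ?_, Or.inl ?_⟩
    · intro v; simp
    · intro D hD E hE; exact t.disj D (hsub D hD).1 E (hsub E hE).1
    · intro D hD; exact Finset.card_pos.1 (t.odd D (hsub D hD).1).pos
    · intro D hD
      rw [Finset.disjoint_union_right]
      exact ⟨t.dT D (hsub D hD).1, by simpa using (hsub D hD).2⟩
    · intro D hD x hx y hxy
      rcases t.cl D (hsub D hD).1 x hx y hxy with h | h | h | h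
      · exact Or.inl h
      · right; simp [h]
      · exact absurd (h.1 ▸ hx) (hsub D hD).2
      · right; simp [h.2]
    · omega
    · omega
    · intro D hD; exact t.odd D (hsub D hD).1

theorem exists_minFrag (hB : Base G) (hex : ∃ 𝒜 N A, Frag G 𝒜 N A) :
    ∃ 𝒜 N A, MinFrag G 𝒜 N A := by
  classical
  have hex' : ∃ m, ∃ 𝒜 N A, Frag G 𝒜 N A ∧ A.card = m := by
    obtain ⟨𝒜, N, A, h⟩ := hex
    exact ⟨_, 𝒜, N, A, h, rfl⟩
  obtain ⟨𝒜, N, A, h, hm⟩ := Nat.find_spec hex'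
  have hmin : ∀ 𝒜' N' A', Frag G 𝒜' N' A' → A.card ≤ A'.card := by
    intro 𝒜' N' A' h'
    rw [hm]
    exact Nat.find_min' hex' ⟨𝒜', N', A', h', rfl⟩
  have hsubA : ∀ X ∈ 𝒜, X ⊆ A := fun X hX v hv => (h.hA v).2 ⟨X, hX, hv⟩
  have hAN : Disjoint A N := by
    rw [Finset.disjoint_left]
    intro v hv hN
    obtain ⟨X, hX, hv⟩ := (h.hA v).1 hv
    exact Finset.disjoint_left.1 (h.dN X hX) hv hN
  have h2N := h.two
  have HE : ∀ X S : Finset V, X.Nonempty → Disjoint X S → Cl G X S → (∃ z, z ∉ X ∧ z ∉ S) →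
    X.card < A.card → 4 ≤ S.card := by
    intro X S hne hd hcl hz hlt
    have h3 := hB.C X S hne hd hcl hz
    by_contra hcon
    have := hmin {X} S X ⟨by intro v; simp, by simp, ?_, by simpa using hne, by simpa using hd, ?_,
      by omega, by rw [Finset.card_singleton]; omega, Or.inr ⟨by simp, hz⟩⟩
    · omega
    · intro D hD E hE hne
      simp at hD hE; rw [hD, hE] at hne; exact absurd rfl hne
    · intro Y hY; simp at hY; rw [hY]; exact hcl
  have HO : ∀ 𝒟 S, OF G 𝒟 S → 𝒟.Nonempty → (𝒟.biUnion id).card < A.card →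
      𝒟.card + 3 ≤ S.card := by
    intro 𝒟 S hO hne hlt
    have hnon : ∀ D ∈ 𝒟, D.Nonempty := fun D hD => Finset.card_pos.1 (hO.odd D hD).pos
    by_contra hcon
    have hS2 : 2 ≤ S.card := by
      by_contra hS
      obtain ⟨D, hD⟩ := hne
      have hDle : D.card < A.card := by
        refine lt_of_le_of_lt (Finset.card_le_card ?_) hlt
        intro v hv; simp only [Finset.mem_biUnion]; exact ⟨D, hD, hv⟩
      have hz : ∃ z, z ∉ D ∧ z ∉ S := by
        by_contra hc
        push Not at hc
        have : A ∪ N ⊆ D ∪ S := by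
          intro v _
          have := hc v
          simp only [Finset.mem_union]; tauto
        have h1 := Finset.card_le_card this
        rw [Finset.card_union_of_disjoint hAN] at h1
        have h2 := Finset.card_union_le D S
        omega
      have := hB.C D S (hnon D hD) (hO.dS D hD) (hO.cl D hD) hz
      omega
    have := hmin 𝒟 S (𝒟.biUnion id) ⟨by intro v; simp, hne, hO.disj, hnon, hO.dS, hO.cl, hS2,
      by omega, Or.inl hO.odd⟩
    omega
  have cN : N.card = 𝒜.card + 2 := by
    refine le_antisymm h.cardN ?_
    rcases h.par with h1 | ⟨h1, z, hz1, hz2⟩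
    · exact hB.B 𝒜 N ⟨h.disj, h1, h.dN, h.cl⟩ h2N
    · obtain ⟨X, hX⟩ := h.ne
      have := hB.C X N (h.nonemp X hX) (h.dN X hX) (h.cl X hX) ⟨z, fun h' => hz1 (hsubA X hX h'), hz2⟩
      omega
  have clY : ∀ D ∈ 𝒜, ∀ Y ⊆ D, (∀ x ∈ Y, ∀ y ∈ D, G.Adj x y → y ∈ Y) → Cl G Y N := by
    intro D hD Y hYD hY x hx y hxy
    rcases h.cl D hD x (hYD hx) y hxy with h1 | h1
    · exact Or.inl (hY x hx y h1 hxy)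
    · exact Or.inr h1
  have oddcase : (∀ X ∈ 𝒜, Odd X.card) → ∀ D ∈ 𝒜, ∀ Y ⊆ D,
      (∀ x ∈ Y, ∀ y ∈ D, G.Adj x y → y ∈ Y) → Odd Y.card → (∃ z ∈ D, z ∉ Y) → False := by
    intro hodd D hD Y hYD hY hYo ⟨z, hzD, hzY⟩
    obtain ⟨y0, hy0⟩ := Finset.card_pos.1 hYo.pos
    have mI : ∀ E ∈ insert Y (𝒜.erase D), E = Y ∨ (E ∈ 𝒜 ∧ E ≠ D) := by
      intro E hE
      simp only [Finset.mem_insert, Finset.mem_erase] at hE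
      tauto
    have hYn : Y ∉ 𝒜.erase D := by
      intro hmem
      rw [Finset.mem_erase] at hmem
      exact Finset.disjoint_left.1 (h.disj Y hmem.2 D hD hmem.1) hy0 (hYD hy0)
    have := HO (insert Y (𝒜.erase D)) N ⟨?_, ?_, ?_, ?_⟩ (by simp) ?_
    · rw [Finset.card_insert_of_notMem hYn] at this
      have := Finset.card_erase_add_one hD
      omega
    · intro E hE F hF hne
      rcases mI E hE with rfl | hE1
      · rcases mI F hF with rfl | hF1
        · exact absurd rfl hne
        · exact (h.disj D hD F hF1.1 hF1.2.symm).mono_left hYD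
      · rcases mI F hF with rfl | hF1
        · exact (h.disj E hE1.1 D hD hE1.2).mono_right hYD
        · exact h.disj E hE1.1 F hF1.1 hne
    · intro E hE
      rcases mI E hE with rfl | hE1
      · exact hYo
      · exact hodd E hE1.1
    · intro E hE
      rcases mI E hE with rfl | hE1
      · exact (h.dN D hD).mono_left hYD
      · exact h.dN E hE1.1
    · intro E hE
      rcases mI E hE with rfl | hE1
      · exact clY D hD E hYD hY
      · exact h.cl E hE1.1
    · apply Finset.card_lt_card
      rw [Finset.ssubset_iff_of_subset]
      · refine ⟨z, hsubA D hD hzD, ?_⟩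
        simp only [Finset.mem_biUnion, not_exists, not_and]
        intro E hE hzE
        rcases mI E hE with rfl | hE1
        · exact hzY hzE
        · exact Finset.disjoint_left.1 (h.disj E hE1.1 D hD hE1.2) hzE hzD
      · rw [Finset.biUnion_subset]
        intro E hE
        rcases mI E hE with rfl | hE1
        · exact hYD.trans (hsubA D hD)
        · exact hsubA E hE1.1
  refine ⟨𝒜, N, A, h.hA, h.ne, h.disj, h.nonemp, h.dN, h.cl, cN, h.par.imp id (fun h => h.1), ?_,
    HO, HE⟩
  intro D hD Y hYD hYne hY
  by_contra hne
  obtain ⟨z, hzD, hzY⟩ : ∃ z ∈ D, z ∉ Y := by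
    by_contra hc
    push Not at hc
    exact hne (Finset.Subset.antisymm hYD hc)
  rcases h.par with hodd | ⟨h1, -⟩
  · by_cases hYo : Odd Y.card
    · exact oddcase hodd D hD Y hYD hY hYo ⟨z, hzD, hzY⟩
    · obtain ⟨y, hy⟩ := hYne
      refine oddcase hodd D hD (D \ Y) Finset.sdiff_subset ?_ ?_ ⟨y, hYD hy, by simp [hy]⟩
      · intro u hu v hv huv
        simp only [Finset.mem_sdiff] at hu ⊢
        exact ⟨hv, fun hvY => hu.2 (hY v hvY u hu.1 huv.symm)⟩
      · have h1 := hodd D hD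
        have h2 := Finset.card_sdiff_add_card_eq_card hYD
        rw [← h2, Nat.odd_add] at h1
        have := Nat.not_odd_iff_even.1 hYo
        tauto
  · have := HE Y N hYne ((h.dN D hD).mono_left hYD) (clY D hD Y hYD hY)
      ⟨z, hzY, Finset.disjoint_left.1 (h.dN D hD) hzD⟩ (by
        apply Finset.card_lt_card
        rw [Finset.ssubset_iff_of_subset (hYD.trans (hsubA D hD))]
        exact ⟨z, hsubA D hD hzD, hzY⟩)
    omega

theorem base_false (hB : Base G) {a b : V} (hab : G.Adj a b) : False := by
  obtain ⟨𝒜, N, A, h⟩ := exists_minFrag hB (exists_frag hB hab)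
  exact minFrag_false hB h

end core


section iface
variable {V : Type*} [DecidableEq V]

theorem even_of_inv (μ : V → V) (D : Finset V)
    (h : ∀ x ∈ D, μ x ∈ D ∧ μ x ≠ x ∧ μ (μ x) = x) : Even D.card := by
  have h1 : ∑ x ∈ D, (1 : ZMod 2) = 0 := by
    refine Finset.sum_involution (fun x _ => μ x) ?_ ?_ ?_ ?_
    · intro a ha; decide
    · intro a ha _; exact (h a ha).2.1
    · intro a ha; exact (h a ha).1
    · intro a ha; exact (h a ha).2.2
  simp only [Finset.sum_const, nsmul_eq_mul, mul_one] at h1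
  exact (ZMod.natCast_eq_zero_iff_even).1 h1

theorem pm_mu {G : SimpleGraph V} {u v : V}
    (h : HasPerfectMatching (G.induce ({u, v} : Set V)ᶜ)) :
    ∃ μ : V → V, ∀ w, w ≠ u → w ≠ v → G.Adj w (μ w) ∧ μ w ≠ u ∧ μ w ≠ v ∧ μ (μ w) = w := by
  obtain ⟨M, hM⟩ := h
  rw [Subgraph.isPerfectMatching_iff] at hM
  have key : ∀ w : V, ∃ z : V, ∀ (h1 : w ≠ u) (h2 : w ≠ v), ∃ hz : z ∈ ({u, v} : Set V)ᶜ,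
      M.Adj ⟨w, by simp [h1, h2]⟩ ⟨z, hz⟩ := by
    intro w
    by_cases hw : w ≠ u ∧ w ≠ v
    · obtain ⟨z, hz, -⟩ := hM ⟨w, by simp [hw]⟩
      exact ⟨z.1, fun _ _ => ⟨z.2, hz⟩⟩
    · exact ⟨w, fun h1 h2 => absurd ⟨h1, h2⟩ hw⟩
  choose μ hμ using key
  refine ⟨μ, fun w h1 h2 => ?_⟩
  obtain ⟨hz, hadj⟩ := hμ w h1 h2
  have hz' := hz
  simp only [Set.mem_compl_iff, Set.mem_insert_iff, Set.mem_singleton_iff, not_or] at hz'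
  refine ⟨hadj.adj_sub, hz'.1, hz'.2, ?_⟩
  obtain ⟨hz2, hadj2⟩ := hμ (μ w) hz'.1 hz'.2
  obtain ⟨t, ht, hu⟩ := hM ⟨μ w, hz⟩
  have e1 := hu _ hadj2
  have e2 := hu _ hadj.symm
  have := e1.trans e2.symm
  exact congrArg Subtype.val this

theorem B_of_pm {G : SimpleGraph V}
    (hp : ∀ u v : V, u ≠ v → HasPerfectMatching (G.induce ({u, v} : Set V)ᶜ))
    (𝒟 : Finset (Finset V)) (S : Finset V) (h : OF G 𝒟 S) (hS : 2 ≤ S.card) :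
    𝒟.card + 2 ≤ S.card := by
  obtain ⟨u, hu, v, hv, huv⟩ := Finset.one_lt_card.1 hS
  obtain ⟨μ, hμ⟩ := pm_mu (hp u v huv)
  have hnu : ∀ D ∈ 𝒟, ∀ x ∈ D, x ≠ u ∧ x ≠ v := by
    intro D hD x hx
    have := Finset.disjoint_left.1 (h.dS D hD) hx
    constructor <;> (rintro rfl; exact this (by assumption))
  have key : ∀ D ∈ 𝒟, ∃ d ∈ D, μ d ∈ S \ {u, v} := by
    intro D hD
    by_contra hc
    push Not at hc
    have := h.odd D hD
    rw [← Nat.not_even_iff_odd] at this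
    apply this
    refine even_of_inv μ D fun x hx => ?_
    obtain ⟨h1, h2⟩ := hnu D hD x hx
    obtain ⟨g1, g2, g3, g4⟩ := hμ x h1 h2
    refine ⟨?_, g1.ne', g4⟩
    rcases h.cl D hD x hx _ g1 with h | h
    · exact h
    · exact absurd (by simp [h, g2, g3]) (hc x hx)
  haveI : Nonempty V := ⟨u⟩
  choose! d hd hdS using key
  have hle : 𝒟.card ≤ (S \ {u, v}).card := by
    refine Finset.card_le_card_of_injOn (fun D => μ (d D)) (fun D hD => hdS D hD) ?_
    intro D hD E hE he
    by_contra hne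
    have h1 := (hμ _ (hnu D hD _ (hd D hD)).1 (hnu D hD _ (hd D hD)).2).2.2.2
    have h2 := (hμ _ (hnu E hE _ (hd E hE)).1 (hnu E hE _ (hd E hE)).2).2.2.2
    simp only at he
    rw [he, h2] at h1
    have := Finset.disjoint_left.1 (h.disj D hD E hE hne) (hd D hD)
    rw [← h1] at this
    exact this (hd E hE)
  have : (S \ {u, v}).card + ({u, v} : Finset V).card = S.card :=
    Finset.card_sdiff_add_card_eq_card (by
      intro x hx; simp at hx; rcases hx with rfl | rfl <;> assumption)
  rw [Finset.card_pair huv] at this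
  omega

theorem even_of_pm {G : SimpleGraph V} [Fintype V]
    (hp : ∀ u v : V, u ≠ v → HasPerfectMatching (G.induce ({u, v} : Set V)ᶜ))
    (h4 : 4 ≤ Fintype.card V) : Even (Fintype.card V) := by
  obtain ⟨u, v, huv⟩ := Fintype.one_lt_card_iff.1 (show 1 < Fintype.card V by omega)
  obtain ⟨μ, hμ⟩ := pm_mu (hp u v huv)
  have : Even ((Finset.univ \ {u, v} : Finset V)).card := by
    refine even_of_inv μ _ fun x hx => ?_
    simp only [Finset.mem_sdiff, Finset.mem_univ, true_and, Finset.mem_insert,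
      Finset.mem_singleton, not_or] at hx ⊢
    obtain ⟨g1, g2, g3, g4⟩ := hμ x hx.1 hx.2
    exact ⟨⟨g2, g3⟩, g1.ne', g4⟩
  have h2 : (Finset.univ \ {u, v} : Finset V).card + ({u, v} : Finset V).card
    = (Finset.univ : Finset V).card :=
    Finset.card_sdiff_add_card_eq_card (Finset.subset_univ _)
  rw [Finset.card_pair huv, Finset.card_univ] at h2
  rw [← h2]
  exact this.add (by decide)

theorem closed_of_conn {G : SimpleGraph V} {S X : Finset V}
    (hc : (G.induce (S : Set V)ᶜ).Connected) (hcl : Cl G X S) {x z : V}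
    (hx : x ∈ X) (hxS : x ∉ S) (hz : z ∉ S) : z ∈ X := by
  obtain ⟨w⟩ := hc.preconnected ⟨x, by simpa using hxS⟩ ⟨z, by simpa using hz⟩
  have gen : ∀ (p q : ((S : Set V)ᶜ : Set V)), (G.induce (S : Set V)ᶜ).Walk p q →
      p.1 ∈ X → q.1 ∈ X := by
    intro p q w
    induction w with
    | nil => exact id
    | @cons p q r hadj _ ih =>
      intro hp
      apply ih
      rcases hcl p.1 hp q.1 hadj with h | h
      · exact h
      · exact absurd h q.2
  exact gen _ _ w hx

theorem C_of_conn {G : SimpleGraph V}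
    (hp : ∀ S : Set V, S.ncard ≤ 2 → (G.induce Sᶜ).Connected)
    (X S : Finset V) (hX : X.Nonempty) (hd : Disjoint X S) (hcl : Cl G X S)
    (hz : ∃ z, z ∉ X ∧ z ∉ S) : 3 ≤ S.card := by
  by_contra hlt
  obtain ⟨x, hx⟩ := hX
  obtain ⟨z, hz1, hz2⟩ := hz
  exact hz1 (closed_of_conn (hp S (by rw [Set.ncard_coe_finset]; omega)) hcl hx
    (Finset.disjoint_left.1 hd hx) hz2)

open Classical in
theorem deg_of {G : SimpleGraph V} [Fintype V] (h4 : 4 ≤ Fintype.card V)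
    (hC : ∀ X S : Finset V, X.Nonempty → Disjoint X S → Cl G X S →
      (∃ z, z ∉ X ∧ z ∉ S) → 3 ≤ S.card)
    (hno : ∀ v, (G.neighborSet v).ncard ≠ 3)
    (v : V) (N : Finset V) (hN : ∀ y, G.Adj v y → y ∈ N) : 4 ≤ N.card := by
  have e : (G.neighborSet v).ncard = (G.neighborFinset v).card := by
    rw [Set.ncard_eq_toFinset_card']; rfl
  have h1 : (G.neighborFinset v).card ≤ N.card :=
    Finset.card_le_card fun y hy => hN y (by simpa using hy)
  have h2 := hno v
  rw [e] at h2
  have h3 : 3 ≤ (G.neighborFinset v).card := by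
    by_cases hz : ∃ z, z ∉ ({v} : Finset V) ∧ z ∉ G.neighborFinset v
    · refine hC {v} _ (by simp) (by simp) ?_ hz
      intro x hx y hy
      simp only [Finset.mem_singleton] at hx
      subst hx
      right; simpa using hy
    · push Not at hz
      have : Finset.univ ⊆ insert v (G.neighborFinset v) := by
        intro z _
        by_cases hzv : z = v
        · simp [hzv]
        · exact Finset.mem_insert_of_mem (hz z (by simpa using hzv))
      have := (Finset.card_le_card this).trans (Finset.card_insert_le _ _)
      rw [Finset.card_univ] at this
      omega
  omega

open Classical in
theorem tutte_fam {G : SimpleGraph V} [Fintype V] {u v : V} (huv : u ≠ v)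
    (h : ¬ HasPerfectMatching (G.induce ({u, v} : Set V)ᶜ)) :
    ∃ 𝒟 T, OF G 𝒟 T ∧ 2 ≤ T.card ∧ T.card ≤ 𝒟.card + 1 := by
  unfold HasPerfectMatching at h
  rw [SimpleGraph.tutte] at h
  push Not at h
  obtain ⟨U, hU⟩ := h
  unfold IsTutteViolator at hU
  set H := G.induce ({u, v} : Set V)ᶜ with hH
  set K := ((⊤ : H.Subgraph).deleteVerts U).coe with hK
  let f : ((⊤ : H.Subgraph).deleteVerts U).verts → V := fun x => x.1.1
  have hf : Function.Injective f := Subtype.val_injective.comp Subtype.val_injective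
  let Df : K.ConnectedComponent → Finset V := fun c => (f '' c.supp).toFinset
  have hmem : ∀ c y, y ∈ Df c ↔ ∃ x ∈ c.supp, f x = y := by
    intro c y; simp [Df]
  let T : Finset V := {u, v} ∪ (Subtype.val '' U).toFinset
  have hT : T.card = 2 + U.ncard := by
    rw [Finset.card_union_of_disjoint, Finset.card_pair huv, ← Set.ncard_eq_toFinset_card',
      Set.ncard_image_of_injective _ Subtype.val_injective]
    rw [Finset.disjoint_left]
    intro x hx hx2
    simp only [Set.mem_toFinset, Set.mem_image] at hx2
    obtain ⟨y, _, rfl⟩ := hx2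
    have := y.2
    simp only [Set.mem_compl_iff, Set.mem_insert_iff, Set.mem_singleton_iff] at this
    simp only [Finset.mem_insert, Finset.mem_singleton] at hx
    exact this hx
  have hdis : ∀ c c' y, y ∈ Df c → y ∈ Df c' → c = c' := by
    intro c c' y h1 h2
    obtain ⟨x, hx, rfl⟩ := (hmem _ _).1 h1
    obtain ⟨x', hx', he⟩ := (hmem _ _).1 h2
    obtain rfl := hf he
    rw [ConnectedComponent.mem_supp_iff] at hx hx'
    exact hx.symm.trans hx'
  have hinj : Function.Injective Df := by
    intro c c' he
    obtain ⟨x, hx⟩ := c.nonempty_supp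
    have h1 : f x ∈ Df c := (hmem _ _).2 ⟨x, hx, rfl⟩
    exact hdis c c' _ h1 (he ▸ h1)
  refine ⟨(K.oddComponents.toFinset).image Df, T, ⟨?_, ?_, ?_, ?_⟩, by omega, ?_⟩
  · intro D hD E hE hne
    simp only [Finset.mem_image] at hD hE
    obtain ⟨c, hc, rfl⟩ := hD
    obtain ⟨c', hc', rfl⟩ := hE
    rw [Finset.disjoint_left]
    intro y h1 h2
    exact hne (by rw [hdis c c' y h1 h2])
  · intro D hD
    simp only [Finset.mem_image, Set.mem_toFinset] at hD
    obtain ⟨c, hc, rfl⟩ := hD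
    have : (Df c).card = c.supp.ncard := by
      rw [← Set.ncard_eq_toFinset_card', Set.ncard_image_of_injective _ hf]
    rw [this]
    exact hc
  · intro D hD
    simp only [Finset.mem_image, Set.mem_toFinset] at hD
    obtain ⟨c, hc, rfl⟩ := hD
    rw [Finset.disjoint_left]
    intro y hy hyT
    obtain ⟨x, hx, rfl⟩ := (hmem _ _).1 hy
    have h1 := x.1.2
    have h2 := x.2
    simp only [Set.mem_compl_iff, Set.mem_insert_iff, Set.mem_singleton_iff] at h1
    simp only [T, Finset.mem_union, Finset.mem_insert, Finset.mem_singleton, Set.mem_toFinset,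
      Set.mem_image] at hyT
    rcases hyT with h | ⟨z, hz, he⟩
    · exact h1 h
    · have : z = x.1 := Subtype.ext he
      subst this
      simp at h2
      exact h2 hz
  · intro D hD
    simp only [Finset.mem_image, Set.mem_toFinset] at hD
    obtain ⟨c, hc, rfl⟩ := hD
    intro a ha b hab
    obtain ⟨x, hx, rfl⟩ := (hmem _ _).1 ha
    by_cases hbT : b ∈ T
    · exact Or.inr hbT
    · left
      simp only [T, Finset.mem_union, Finset.mem_insert, Finset.mem_singleton, Set.mem_toFinset,
        Set.mem_image, not_or] at hbT
      have hb1 : b ∈ ({u, v} : Set V)ᶜ := by simp [hbT.1]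
      have hb2 : (⟨b, hb1⟩ : (({u, v} : Set V)ᶜ : Set V)) ∉ U := fun h => hbT.2 ⟨_, h, rfl⟩
      let y : ((⊤ : H.Subgraph).deleteVerts U).verts := ⟨⟨b, hb1⟩, by simp [hb2]⟩
      have hadj : K.Adj x y := by
        have h2 := x.2
        simp at h2
        have h3 : H.Adj x.1 y.1 := hab
        simp [K, h2, h3, y, hb2]
      refine (hmem _ _).2 ⟨y, ?_, rfl⟩
      rw [ConnectedComponent.mem_supp_iff] at hx ⊢
      rw [← hx]
      exact (ConnectedComponent.sound hadj.reachable).symm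
  · rw [Finset.card_image_of_injective _ hinj, ← Set.ncard_eq_toFinset_card', hT]
    omega

end iface


section iface2
variable {V : Type*} [DecidableEq V]

open Classical in
theorem typeII_of {G G' : SimpleGraph V} [Fintype V] {a b : V}
    (h4 : 4 ≤ Fintype.card V)
    (hC : ∀ X S : Finset V, X.Nonempty → Disjoint X S → Cl G X S →
      (∃ z, z ∉ X ∧ z ∉ S) → 3 ≤ S.card)
    (hG' : ∀ x y, G.Adj x y → G'.Adj x y ∨ (x = a ∧ y = b) ∨ (x = b ∧ y = a))
    (hnot : ¬ IsThreeConnected G') : ∃ P Q T, TII G a b P Q T := by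
  unfold IsThreeConnected at hnot
  push Not at hnot
  obtain ⟨S, hS, hnc⟩ := hnot h4
  have hSc : S.toFinset.card ≤ 2 := by rw [← Set.ncard_eq_toFinset_card']; exact hS
  have hne : Nonempty (Sᶜ : Set V) := by
    by_contra hc
    have : (Finset.univ : Finset V) ⊆ S.toFinset := by
      intro x _
      rw [Set.mem_toFinset]
      by_contra hx
      exact hc ⟨⟨x, hx⟩⟩
    have := Finset.card_le_card this
    rw [Finset.card_univ] at this
    omega
  rw [connected_iff] at hnc
  have hnp : ¬ (G'.induce Sᶜ).Preconnected := fun h => hnc ⟨h, hne⟩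
  unfold Preconnected at hnp
  push Not at hnp
  obtain ⟨x, z, hxz⟩ := hnp
  let P : Finset V := Finset.univ.filter fun v => ∃ h : v ∈ Sᶜ, (G'.induce Sᶜ).Reachable x ⟨v, h⟩
  have hP : ∀ v, v ∈ P ↔ ∃ h : v ∈ Sᶜ, (G'.induce Sᶜ).Reachable x ⟨v, h⟩ := by
    intro v; simp [P]
  have hxP : x.1 ∈ P := (hP _).2 ⟨x.2, Reachable.refl _⟩
  have hzP : z.1 ∉ P := fun h => hxz ((hP _).1 h).2
  have hPS : Disjoint P S.toFinset := by
    rw [Finset.disjoint_left]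
    intro v hv hv2
    exact ((hP v).1 hv).1 (by simpa using hv2)
  have hcl : Cl G' P S.toFinset := by
    intro p hp q hpq
    by_cases hq : q ∈ S
    · right; simpa using hq
    · left
      obtain ⟨h1, h2⟩ := (hP p).1 hp
      refine (hP q).2 ⟨hq, h2.trans ?_⟩
      apply Adj.reachable
      exact hpq
  have hncl : ¬ Cl G P S.toFinset := by
    intro h
    have := hC P _ ⟨_, hxP⟩ hPS h ⟨z.1, hzP, fun hh => z.2 (Set.mem_toFinset.1 hh)⟩
    omega
  set Sf := S.toFinset with hSf
  unfold Cl at hncl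
  push Not at hncl
  obtain ⟨p, hp, q, hpq, hqP, hqS⟩ := hncl
  have hcl2 : ∀ x ∈ P, ∀ y, y ∉ P → y ∉ Sf → ¬ G'.Adj x y := by
    intro x hx y h1 h2 h3
    rcases hcl x hx y h3 with h | h
    · exact h1 h
    · exact h2 h
  have hor : (p = a ∧ q = b) ∨ (p = b ∧ q = a) := by
    rcases hG' p q hpq with h | h
    · exact absurd h (hcl2 p hp q hqP hqS)
    · exact h
  have hdj := Finset.disjoint_left.1 hPS
  rcases hor with ⟨rfl, rfl⟩ | ⟨rfl, rfl⟩
  · refine ⟨P, Finset.univ \ (P ∪ Sf), Sf, ?_, ?_, hPS, ?_, hSc, hp, by simp [hqP, hqS], ?_⟩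
    · intro v; simp only [Finset.mem_sdiff, Finset.mem_univ, Finset.mem_union]; tauto
    · rw [Finset.disjoint_left]; intro v; simp; tauto
    · rw [Finset.disjoint_left]; intro v; simp
    · intro x hx y hy hxy
      simp only [Finset.mem_sdiff, Finset.mem_univ, Finset.mem_union, not_or, true_and] at hy
      rcases hG' x y hxy with h | h | h
      · exact absurd h (hcl2 x hx y hy.1 hy.2)
      · exact h
      · rw [h.1] at hx; exact absurd hx hqP
  · refine ⟨Finset.univ \ (P ∪ Sf), P, Sf, ?_, ?_, ?_, hPS, hSc, by simp [hqP, hqS], hp, ?_⟩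
    · intro v; simp only [Finset.mem_sdiff, Finset.mem_univ, Finset.mem_union]; tauto
    · rw [Finset.disjoint_left]; intro v; simp; tauto
    · rw [Finset.disjoint_left]; intro v; simp
    · intro y hy x hx hxy
      simp only [Finset.mem_sdiff, Finset.mem_univ, Finset.mem_union, not_or, true_and] at hy
      rcases hG' x y hxy.symm with h | h | h
      · exact absurd h (hcl2 x hx y hy.1 hy.2)
      · rw [h.1] at hx; exact absurd hx hqP
      · exact ⟨h.2, h.1⟩

theorem OF_insert {G : SimpleGraph V} {𝒟 : Finset (Finset V)} {T K : Finset V}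
    (h : OF G 𝒟 T) (hK : Odd K.card) (hKT : Disjoint K T) (hKD : ∀ D ∈ 𝒟, Disjoint K D)
    (hcl : Cl G K T) : OF G (insert K 𝒟) T ∧ (insert K 𝒟).card = 𝒟.card + 1 := by
  refine ⟨⟨?_, ?_, ?_, ?_⟩, ?_⟩
  · intro D hD E hE hne
    rw [Finset.mem_insert] at hD hE
    rcases hD with rfl | hD <;> rcases hE with rfl | hE
    · exact absurd rfl hne
    · exact hKD E hE
    · exact (hKD D hD).symm
    · exact h.disj D hD E hE hne
  · intro D hD
    rw [Finset.mem_insert] at hD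
    rcases hD with rfl | hD
    · exact hK
    · exact h.odd D hD
  · intro D hD
    rw [Finset.mem_insert] at hD
    rcases hD with rfl | hD
    · exact hKT
    · exact h.dS D hD
  · intro D hD
    rw [Finset.mem_insert] at hD
    rcases hD with rfl | hD
    · exact hcl
    · exact h.cl D hD
  · apply Finset.card_insert_of_notMem
    intro hm
    have := hKD K hm
    rw [disjoint_self] at this
    simp at this
    subst this
    simp at hK

theorem OF_improve {G : SimpleGraph V} {𝒟 : Finset (Finset V)} {T K : Finset V}
    (h : OF G 𝒟 T) (hc : T.card ≤ 𝒟.card + 1) (hK : K.Nonempty) (hKT : Disjoint K T)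
    (hKD : ∀ D ∈ 𝒟, Disjoint K D) (hcl : Cl G K T) :
    ∃ 𝒟' T', OF G 𝒟' T' ∧ T.card ≤ T'.card ∧ T'.card ≤ 𝒟'.card + 1 ∧
      T.card + 𝒟.card < T'.card + 𝒟'.card := by
  by_cases ho : Odd K.card
  · obtain ⟨h1, h2⟩ := OF_insert h ho hKT hKD hcl
    exact ⟨_, _, h1, le_rfl, by omega, by omega⟩
  · obtain ⟨v, hv⟩ := hK
    have hvT : v ∉ T := Finset.disjoint_left.1 hKT hv
    have h' : OF G 𝒟 (insert v T) := by
      refine ⟨h.disj, h.odd, ?_, ?_⟩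
      · intro D hD
        rw [Finset.disjoint_insert_right]
        exact ⟨Finset.disjoint_left.1 (hKD D hD) hv, h.dS D hD⟩
      · intro D hD x hx y hxy
        rcases h.cl D hD x hx y hxy with h | h
        · exact Or.inl h
        · exact Or.inr (Finset.mem_insert_of_mem h)
    have hcard := Finset.card_erase_add_one hv
    have hsub := Finset.erase_subset v K
    obtain ⟨h1, h2⟩ := OF_insert (K := K.erase v) h' (by
        rw [Nat.not_odd_iff_even] at ho
        rw [← hcard, Nat.even_add_one] at ho
        exact Nat.not_even_iff_odd.1 ho) (by
        rw [Finset.disjoint_insert_right]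
        exact ⟨by simp, hKT.mono_left hsub⟩)
      (fun D hD => (hKD D hD).mono_left hsub) (by
        intro x hx y hxy
        have := hcl x (hsub hx) y hxy
        simp only [Finset.mem_erase, Finset.mem_insert]
        tauto)
    have h3 := Finset.card_insert_of_notMem hvT
    exact ⟨_, _, h1, by omega, by omega, by omega⟩

open Classical in
theorem typeI_of {G G' : SimpleGraph V} [Fintype V] {a b : V}
    (heven : Even (Fintype.card V))
    (hB : ∀ 𝒟 S, OF G 𝒟 S → 2 ≤ S.card → 𝒟.card + 2 ≤ S.card)
    (hle : ∀ x y, G'.Adj x y → G.Adj x y)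
    (hG' : ∀ x y, G.Adj x y → G'.Adj x y ∨ (x = a ∧ y = b) ∨ (x = b ∧ y = a))
    (hnot : ∃ u v : V, u ≠ v ∧ ¬ HasPerfectMatching (G'.induce ({u, v} : Set V)ᶜ)) :
    ∃ 𝒟 T D₁ D₂, TI G a b 𝒟 T D₁ D₂ := by
  obtain ⟨u, v, huv, hn⟩ := hnot
  obtain ⟨𝒟₀, T₀, h0⟩ := tutte_fam huv hn
  let Fm : Finset (Finset (Finset V) × Finset V) := Finset.univ.filter fun p =>
    OF G' p.1 p.2 ∧ 2 ≤ p.2.card ∧ p.2.card ≤ p.1.card + 1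
  obtain ⟨⟨𝒟, T⟩, hm, hmax⟩ := Finset.exists_max_image Fm (fun p => p.2.card + p.1.card)
    ⟨(𝒟₀, T₀), by simp only [Fm, Finset.mem_filter, Finset.mem_univ, true_and]; exact h0⟩
  simp only [Fm, Finset.mem_filter, Finset.mem_univ, true_and] at hm hmax
  obtain ⟨hOF, hT2, hTc⟩ := hm
  have imp : ∀ (ℰ : Finset (Finset V)) (K : Finset V), OF G' ℰ T → ℰ.card = 𝒟.card →
      K.Nonempty → Disjoint K T → (∀ D ∈ ℰ, Disjoint K D) → Cl G' K T → False := by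
    intro ℰ K hE hEc hK hKT hKD hcl
    obtain ⟨𝒟', T', h1, h2, h3, h4⟩ := OF_improve hE (by omega) hK hKT hKD hcl
    have := hmax (𝒟', T') ⟨h1, le_trans hT2 h2, h3⟩
    simp only at this
    omega
  have cov : ∀ v, v ∈ T ∨ ∃ D ∈ 𝒟, v ∈ D := by
    intro v
    by_contra hv
    push Not at hv
    let L : Finset V := Finset.univ.filter fun w => w ∉ T ∧ ∀ D ∈ 𝒟, w ∉ D
    have hL : ∀ w, w ∈ L ↔ w ∉ T ∧ ∀ D ∈ 𝒟, w ∉ D := by intro w; simp [L]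
    refine imp 𝒟 L hOF rfl ⟨v, (hL v).2 hv⟩ ?_ ?_ ?_
    · rw [Finset.disjoint_left]; intro w hw; exact ((hL w).1 hw).1
    · intro D hD
      rw [Finset.disjoint_left]; intro w hw; exact ((hL w).1 hw).2 D hD
    · intro x hx y hxy
      by_contra hc
      push Not at hc
      rw [hL] at hx hc
      apply hc.1
      refine ⟨hc.2, fun D hD hy => ?_⟩
      rcases hOF.cl D hD y hy x hxy.symm with h | h
      · exact hx.2 D hD h
      · exact hx.1 h
  have conn : ∀ D ∈ 𝒟, ∀ Y ⊆ D, Y.Nonempty →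
      (∀ x ∈ Y, ∀ y ∈ D, G.Adj x y → y ∈ Y) → Y = D := by
    have odd : ∀ D ∈ 𝒟, ∀ Y ⊆ D, Odd Y.card → (D \ Y).Nonempty →
        (∀ x ∈ Y, ∀ y ∈ D, G'.Adj x y → y ∈ Y) → False := by
      intro D hD Y hYD hYo hne hcl
      have hE : OF G' (𝒟.erase D) T :=
        ⟨fun A hA B hB => hOF.disj A (Finset.mem_of_mem_erase hA) B (Finset.mem_of_mem_erase hB),
          fun A hA => hOF.odd A (Finset.mem_of_mem_erase hA),
          fun A hA => hOF.dS A (Finset.mem_of_mem_erase hA),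
          fun A hA => hOF.cl A (Finset.mem_of_mem_erase hA)⟩
      have hdD : ∀ E ∈ 𝒟.erase D, Disjoint D E := fun E hE =>
        hOF.disj D hD E (Finset.mem_of_mem_erase hE) (Finset.ne_of_mem_erase hE).symm
      obtain ⟨h1, h2⟩ := OF_insert (K := Y) hE hYo ((hOF.dS D hD).mono_left hYD)
        (fun E hE => (hdD E hE).mono_left hYD) (by
          intro x hx y hxy
          rcases hOF.cl D hD x (hYD hx) y hxy with h | h
          · exact Or.inl (hcl x hx y h hxy)
          · exact Or.inr h)
      refine imp _ (D \ Y) h1 (by rw [h2, Finset.card_erase_add_one hD]) hne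
        ((hOF.dS D hD).mono_left Finset.sdiff_subset) ?_ ?_
      · intro E hE
        rw [Finset.mem_insert] at hE
        rcases hE with rfl | hE
        · exact Finset.sdiff_disjoint
        · exact (hdD E hE).mono_left Finset.sdiff_subset
      · intro x hx y hxy
        rw [Finset.mem_sdiff] at hx
        rcases hOF.cl D hD x hx.1 y hxy with h | h
        · left
          rw [Finset.mem_sdiff]
          exact ⟨h, fun hy => hx.2 (hcl y hy x hx.1 hxy.symm)⟩
        · exact Or.inr h
    intro D hD Y hYD hYne hcl
    by_contra hne
    have hne2 : (D \ Y).Nonempty := by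
      rw [Finset.sdiff_nonempty]
      exact fun h => hne (Finset.Subset.antisymm hYD h)
    by_cases hYo : Odd Y.card
    · exact odd D hD Y hYD hYo hne2 fun x hx y hy hxy => hcl x hx y hy (hle _ _ hxy)
    · refine odd D hD (D \ Y) Finset.sdiff_subset ?_ ?_ ?_
      · have h1 := hOF.odd D hD
        have h2 := Finset.card_sdiff_add_card_eq_card hYD
        rw [← h2, Nat.odd_add] at h1
        have := Nat.not_odd_iff_even.1 hYo
        tauto
      · rw [Finset.sdiff_sdiff_eq_self hYD]; exact hYne
      · intro x hx y hy hxy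
        rw [Finset.mem_sdiff] at hx ⊢
        exact ⟨hy, fun h => hx.2 (hcl y h x hx.1 (hle _ _ hxy.symm))⟩
  -- parity
  have hpar : T.card ≤ 𝒟.card := by
    have hun : (Finset.univ : Finset V) = T ∪ 𝒟.biUnion id := by
      ext v
      simp only [Finset.mem_univ, Finset.mem_union, Finset.mem_biUnion, id, true_iff]
      exact cov v
    have hd : Disjoint T (𝒟.biUnion id) := by
      rw [Finset.disjoint_biUnion_right]
      exact fun D hD => (hOF.dS D hD).symm
    have hcu : (𝒟.biUnion id).card = ∑ D ∈ 𝒟, D.card :=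
      Finset.card_biUnion fun D hD E hE hne => hOF.disj D hD E hE hne
    have hcard : Fintype.card V = T.card + ∑ D ∈ 𝒟, D.card := by
      rw [← Finset.card_univ, hun, Finset.card_union_of_disjoint hd, hcu]
    have hs : (∑ D ∈ 𝒟, D.card) % 2 = 𝒟.card % 2 := by
      have : (∑ D ∈ 𝒟, D.card) ≡ ∑ D ∈ 𝒟, 1 [MOD 2] := by
        rw [Nat.ModEq, Finset.sum_nat_mod]
        conv_rhs => rw [Finset.sum_nat_mod]
        congr 1
        refine Finset.sum_congr rfl fun D hD => ?_
        rw [Nat.odd_iff.1 (hOF.odd D hD)]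
      simpa [Nat.ModEq] using this
    rw [Nat.even_iff] at heven
    omega
  have hclG : ∀ D ∈ 𝒟, ∀ x ∈ D, ∀ y, G.Adj x y →
      y ∈ D ∨ y ∈ T ∨ (x = a ∧ y = b) ∨ (x = b ∧ y = a) := by
    intro D hD x hx y hxy
    rcases hG' x y hxy with h | h
    · rcases hOF.cl D hD x hx y h with h | h
      · exact Or.inl h
      · exact Or.inr (Or.inl h)
    · exact Or.inr (Or.inr h)
  have hnOF : ¬ OF G 𝒟 T := by
    intro h
    have := hB 𝒟 T h hT2
    omega
  have hsep : ∃ D₁ ∈ 𝒟, ∃ D₂ ∈ 𝒟, D₁ ≠ D₂ ∧ a ∈ D₁ ∧ b ∈ D₂ := by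
    by_contra hc
    push Not at hc
    apply hnOF
    refine ⟨hOF.disj, hOF.odd, hOF.dS, ?_⟩
    intro D hD x hx y hxy
    rcases hclG D hD x hx y hxy with h | h | ⟨rfl, rfl⟩ | ⟨rfl, rfl⟩
    · exact Or.inl h
    · exact Or.inr h
    · rcases cov y with h | ⟨E, hE, hy⟩
      · exact Or.inr h
      · by_cases hDE : D = E
        · subst hDE; exact Or.inl hy
        · exact absurd hy (hc D hD E hE hDE hx)
    · rcases cov y with h | ⟨E, hE, hy⟩
      · exact Or.inr h
      · by_cases hDE : E = D
        · subst hDE; exact Or.inl hy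
        · exact absurd hx (hc E hE D hD hDE hy)
  obtain ⟨D₁, h1, D₂, h2, hne, ha, hb⟩ := hsep
  have hE : OF G ((𝒟.erase D₁).erase D₂) T := by
    have hm : ∀ A ∈ (𝒟.erase D₁).erase D₂, A ∈ 𝒟 ∧ A ≠ D₁ ∧ A ≠ D₂ := by
      intro A hA; simp only [Finset.mem_erase] at hA; tauto
    refine ⟨fun A hA B hB => hOF.disj A (hm A hA).1 B (hm B hB).1,
      fun A hA => hOF.odd A (hm A hA).1, fun A hA => hOF.dS A (hm A hA).1, ?_⟩
    intro A hA x hx y hxy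
    obtain ⟨g1, g2, g3⟩ := hm A hA
    rcases hclG A g1 x hx y hxy with h | h | ⟨rfl, rfl⟩ | ⟨rfl, rfl⟩
    · exact Or.inl h
    · exact Or.inr h
    · exact absurd ha (Finset.disjoint_left.1 (hOF.disj A g1 D₁ h1 g2) hx)
    · exact absurd hb (Finset.disjoint_left.1 (hOF.disj A g1 D₂ h2 g3) hx)
  have h3 := hB _ _ hE hT2
  rw [Finset.card_erase_of_mem (Finset.mem_erase.2 ⟨hne.symm, h2⟩),
    Finset.card_erase_of_mem h1] at h3
  exact ⟨𝒟, T, D₁, D₂, h1, h2, hne, ha, hb, by omega, hOF.disj, hOF.odd, hOF.dS, cov, hclG, conn⟩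

theorem base_of {G : SimpleGraph V} [Fintype V] (hG : IsMinimalBrick G)
    (hno : ∀ v, (G.neighborSet v).ncard ≠ 3) : Base G := by
  obtain ⟨⟨⟨h4, hconn⟩, hpm⟩, hmin⟩ := hG
  have hC := C_of_conn hconn
  have hBB := B_of_pm hpm
  refine ⟨hBB, hC, deg_of h4 hC hno, ?_⟩
  intro a b hab
  have hG' : ∀ x y, G.Adj x y →
      (G.deleteEdges {s(a, b)}).Adj x y ∨ (x = a ∧ y = b) ∨ (x = b ∧ y = a) := by
    intro x y hxy
    rw [deleteEdges_adj]
    simp only [Set.mem_singleton_iff, Sym2.eq_iff]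
    tauto
  have hle : ∀ x y, (G.deleteEdges {s(a, b)}).Adj x y → G.Adj x y := by
    intro x y h
    rw [deleteEdges_adj] at h
    exact h.1
  by_cases h3 : IsThreeConnected (G.deleteEdges {s(a, b)})
  · right
    refine typeI_of (even_of_pm hpm h4) hBB hle hG' ?_
    by_contra hc
    push Not at hc
    exact hmin s(a, b) hab ⟨h3, hc⟩
  · left
    exact typeII_of h4 hC hG' h3

end iface2

theorem minimalBrick_has_cubic_vertex {V : Type*} [Fintype V]
    (G : SimpleGraph V) (hG : IsMinimalBrick G) :
    ∃ v : V, (G.neighborSet v).ncard = 3 := by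
  classical
  by_contra hno
  push Not at hno
  have hB := base_of hG hno
  have h4 := hG.1.1.1
  obtain ⟨v⟩ : Nonempty V := Fintype.card_pos_iff.1 (by omega)
  by_cases h : ∃ w, G.Adj v w
  · obtain ⟨w, hw⟩ := h
    exact base_false hB hw
  · push Not at h
    have := hB.deg v ∅ (fun y hy => absurd hy (h y))
    simp at this
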